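/- arXiv:1411.6716 — 2 statements merged into one kernel-verified Lean document; each statement's English description precedes it below -/
import Mathlib

section
/- Fix d ≥ 1, orders q = (q_1,…,q_d) with q_k ≥ 2, a quasi-uniformity constant C₀ ≥ 1, and 0 < K_min ≤ K_max. There exist constants ε₀ ∈ (0,1) and 0 < c ≤ C < ∞, depending only on q, d, C₀, K_min and K_max, with the following property. Suppose each direction's knot sequence (N_k interior knots, J_k = N_k + q_k) is quasi-uniform with constant C₀; suppose G is a cumulative distribution function on [0,1]^d whose density lies in [K_min, K_max]; and suppose the design points X_1,…,X_n ∈ [0,1]^d satisfy sup_{x∈[0,1]^d} |G_n(x) − G(x)| ≤ ε₀ ∏_{k=1}^d N_k^{−1}, where G_n is their empirical distribution function. Then for every θ ∈ ℝ^J (J = ∏_k J_k): c n (∏_{k=1}^d J_k^{−1}) ‖θ‖² ≤ θᵀBᵀBθ ≤ C n (∏_{k=1}^d J_k^{−1}) ‖θ‖², where B is the n × J design matrix of tensor-product B-splines and ‖θ‖ is the Euclidean norm. -/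
open MeasureTheory

/-- A knot sequence `0 = t 0 < t 1 < ⋯ < t N < t (N+1) = 1` on `[0,1]` with `N` interior
knots. -/
structure KnotSeq where
  N : ℕ
  t : ℕ → ℝ
  t0 : t 0 = 0
  tN : t (N + 1) = 1
  mono : ∀ l, l < N + 1 → t l < t (l + 1)

namespace KnotSeq

/-- The extended knot sequence: the boundary knots `0` and `1` are repeated. -/
noncomputable def T (ks : KnotSeq) (l : ℤ) : ℝ :=
  if l ≤ 0 then 0 else if (ks.N + 1 : ℤ) ≤ l then 1 else ks.t l.toNat

/-- The mesh size `Δ = max_{1 ≤ l ≤ N+1} (t l − t (l−1))`. -/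
noncomputable def mesh (ks : KnotSeq) : ℝ :=
  (Finset.Icc 1 (ks.N + 1)).sup' (Finset.nonempty_Icc.mpr (by omega))
    fun l => ks.t l - ks.t (l - 1)

/-- Quasi-uniformity with constant `C₀`: the mesh size is at most `C₀` times every
spacing. -/
def QuasiUniform (ks : KnotSeq) (C₀ : ℝ) : Prop :=
  ∀ l ∈ Finset.Icc 1 (ks.N + 1), ks.mesh ≤ C₀ * (ks.t l - ks.t (l - 1))

end KnotSeq

/-- The normalized B-spline `B_{j,m}` of order `m` for the extended knot sequence `T`,
defined by the Cox–de Boor recursion.  `B_{j,1}` is the indicator of `[T (j−1), T j)`,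
also including the point `1` when `T j = 1 > T (j−1)`; for orders `≥ 2` the recursion is
`B_{j,m}(x) = ((x − T(j−m))/(T(j−1) − T(j−m))) B_{j−1,m−1}(x)
  + ((T j − x)/(T j − T(j−m+1))) B_{j,m−1}(x)`,
a term with zero denominator being zero (Lean's division-by-zero convention). -/
noncomputable def Bspl (T : ℤ → ℝ) : ℕ → ℤ → ℝ → ℝ
  | 0, _, _ => 0
  | 1, j, x =>
      if T (j - 1) ≤ x ∧ (x < T j ∨ (x = 1 ∧ T j = 1 ∧ T (j - 1) < 1)) then 1 else 0
  | m + 2, j, x =>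
      (x - T (j - (m + 2))) / (T (j - 1) - T (j - (m + 2))) * Bspl T (m + 1) (j - 1) x
        + (T j - x) / (T j - T (j - (m + 1))) * Bspl T (m + 1) j x

open scoped Classical

/-! ### One-dimensional B-spline facts -/

lemma bspl_succ (T : ℤ → ℝ) (m : ℕ) (hm : 1 ≤ m) (j : ℤ) (x : ℝ) :
    Bspl T (m + 1) j x =
      (x - T (j - 1 - m)) / (T (j - 1) - T (j - 1 - m)) * Bspl T m (j - 1) x
        + (T j - x) / (T j - T (j - m)) * Bspl T m j x := by
  obtain ⟨p, rfl⟩ : ∃ p, m = p + 1 := ⟨m - 1, by omega⟩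
  rw [Bspl]
  have e1 : j - ((p : ℤ) + 2) = j - 1 - ((p + 1 : ℕ) : ℤ) := by push_cast; ring
  have e2 : j - ((p : ℤ) + 1) = j - ((p + 1 : ℕ) : ℤ) := by push_cast; ring
  rw [e1, e2]

lemma bspl_supp (T : ℤ → ℝ) (hT : Monotone T) (m : ℕ) (hm : 1 ≤ m) :
    ∀ (j : ℤ) (x : ℝ), Bspl T m j x ≠ 0 → T (j - m) ≤ x ∧ x ≤ T j := by
  induction m, hm using Nat.le_induction with
  | base =>
    intro j x h
    rw [Bspl] at h
    split_ifs at h with h1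
    · refine ⟨by simpa using h1.1, ?_⟩
      rcases h1.2 with h2 | h2
      · exact h2.le
      · rw [h2.1, h2.2.1]
    · exact absurd rfl h
  | succ m hm ih =>
    intro j x h
    rw [bspl_succ T m hm] at h
    by_cases h1 : Bspl T m (j - 1) x = 0
    · by_cases h2 : Bspl T m j x = 0
      · rw [h1, h2] at h; simp at h
      · have := ih j x h2
        exact ⟨(hT (by push_cast; omega)).trans this.1, this.2⟩
    · have := ih (j - 1) x h1
      refine ⟨(hT (by push_cast; omega)).trans this.1, this.2.trans (hT (by omega))⟩

lemma bspl_zero (T : ℤ → ℝ) (hT : Monotone T) (hT1 : ∀ l, T l ≤ 1) (m : ℕ) (hm : 1 ≤ m)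
    (l : ℤ) (x : ℝ) (hx : T (l - 1) ≤ x) (hx' : x < T l) :
    ∀ (j : ℤ), (j < l ∨ l + m ≤ j) → Bspl T m j x = 0 := by
  induction m, hm using Nat.le_induction with
  | base =>
    intro j h
    rw [Bspl, if_neg]
    rintro ⟨h1, h2⟩
    rcases h with h | h
    · have := hT (show j ≤ l - 1 by omega)
      rcases h2 with h2 | h2
      · linarith
      · linarith [hT1 l, h2.1]
    · have := hT (show l ≤ j - 1 by push_cast at h; omega)
      linarith
  | succ m hm ih =>
    intro j h
    rw [bspl_succ T m hm, ih j (by push_cast at h; omega), ih (j - 1) (by push_cast at h; omega)]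
    simp

lemma bspl_w1 (T : ℤ → ℝ) (hT : Monotone T) (m : ℕ) (hm : 1 ≤ m) (j : ℤ) (x : ℝ) :
    |(x - T (j - m)) / (T j - T (j - m)) * Bspl T m j x| ≤ |Bspl T m j x| := by
  by_cases h : Bspl T m j x = 0
  · simp [h]
  · obtain ⟨h1, h2⟩ := bspl_supp T hT m hm j x h
    rw [abs_mul, abs_of_nonneg (div_nonneg (by linarith) (by linarith))]
    exact mul_le_of_le_one_left (abs_nonneg _) (div_le_one_of_le₀ (by linarith) (by linarith))

lemma bspl_w2 (T : ℤ → ℝ) (hT : Monotone T) (m : ℕ) (hm : 1 ≤ m) (j : ℤ) (x : ℝ) :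
    |(T j - x) / (T j - T (j - m)) * Bspl T m j x| ≤ |Bspl T m j x| := by
  by_cases h : Bspl T m j x = 0
  · simp [h]
  · obtain ⟨h1, h2⟩ := bspl_supp T hT m hm j x h
    rw [abs_mul, abs_of_nonneg (div_nonneg (by linarith) (by linarith))]
    exact mul_le_of_le_one_left (abs_nonneg _) (div_le_one_of_le₀ (by linarith) (by linarith))

lemma bspl_sum (T : ℤ → ℝ) (hT : Monotone T) (hT1 : ∀ l, T l ≤ 1) (x : ℝ) (m : ℕ) (hm : 1 ≤ m) :
    ∀ S : Finset ℤ, ∑ j ∈ S, |Bspl T m j x| ≤ 2 ^ m := by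
  induction m, hm using Nat.le_induction with
  | base =>
    intro S
    have key : ∀ j j' : ℤ, j < j' → Bspl T 1 j x ≠ 0 → Bspl T 1 j' x ≠ 0 → False := by
      intro j j' hjj h h'
      rw [Bspl] at h h'
      split_ifs at h with h1
      split_ifs at h' with h2
      have := hT (show j ≤ j' - 1 by omega)
      rcases h1.2 with h3 | h3
      · linarith [h2.1]
      · rcases h2.2 with h4 | h4
        · linarith [h2.1, hT1 j']
        · linarith [h4.2.2]
      · exact h' rfl
      · exact h rfl
    have hle : ∀ j, |Bspl T 1 j x| ≤ 1 := by
      intro j; rw [Bspl]; split_ifs <;> simp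
    by_cases h : ∃ j0 ∈ S, Bspl T 1 j0 x ≠ 0
    · obtain ⟨j0, hj0, h0⟩ := h
      rw [Finset.sum_eq_single j0]
      · linarith [hle j0]
      · intro b _ hb
        by_contra hne
        have hne' : Bspl T 1 b x ≠ 0 := fun h => hne (by simp [h])
        rcases lt_or_gt_of_ne hb with h | h
        · exact key _ _ h hne' h0
        · exact key _ _ h h0 hne'
      · intro h; exact absurd hj0 h
    · push Not at h
      rw [Finset.sum_eq_zero (fun j hj => by rw [h j hj]; simp)]
      norm_num
  | succ m hm ih =>
    intro S
    have h1 : ∑ j ∈ S, |Bspl T m (j - 1) x| ≤ 2 ^ m := by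
      have := ih (S.map (Equiv.subRight (1 : ℤ)).toEmbedding)
      rw [Finset.sum_map] at this
      simpa using this
    calc ∑ j ∈ S, |Bspl T (m + 1) j x|
        ≤ ∑ j ∈ S, (|Bspl T m (j - 1) x| + |Bspl T m j x|) := by
          apply Finset.sum_le_sum
          intro j _
          rw [bspl_succ T m hm]
          exact (abs_add_le _ _).trans (add_le_add (bspl_w1 T hT m hm (j-1) x) (bspl_w2 T hT m hm j x))
      _ ≤ 2 ^ m + 2 ^ m := by
          rw [Finset.sum_add_distrib]; exact add_le_add h1 (ih S)
      _ = 2 ^ (m + 1) := by ring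

lemma bspl_abs (T : ℤ → ℝ) (hT : Monotone T) (hT1 : ∀ l, T l ≤ 1) (x : ℝ) (m : ℕ) (hm : 1 ≤ m)
    (j : ℤ) : |Bspl T m j x| ≤ 2 ^ m := by
  simpa using bspl_sum T hT hT1 x m hm {j}

lemma lip_aux (w w' B B' e M L : ℝ) (hw : |w - w'| ≤ e) (hw' : |w'| ≤ 1)
    (hB : |B| ≤ M) (hBB : |B - B'| ≤ L * e) (he : 0 ≤ e) :
    |w * B - w' * B'| ≤ (M + L) * e := by
  have : w * B - w' * B' = (w - w') * B + w' * (B - B') := by ring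
  rw [this]
  refine (abs_add_le _ _).trans ?_
  rw [abs_mul, abs_mul]
  have h1 : |w - w'| * |B| ≤ e * M := mul_le_mul hw hB (abs_nonneg _) he
  have h2 : |w'| * |B - B'| ≤ 1 * (L * e) := mul_le_mul hw' hBB (abs_nonneg _) zero_le_one
  nlinarith

lemma bspl_lip (T : ℤ → ℝ) (hT : Monotone T) (hT1 : ∀ l, T l ≤ 1) (m : ℕ) (hm : 1 ≤ m)
    (l : ℤ) (x x' : ℝ) (hx : T (l - 1) ≤ x) (hx' : x < T l)
    (hy : T (l - 1) ≤ x') (hy' : x' < T l) :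
    ∀ j : ℤ, |Bspl T m j x - Bspl T m j x'| ≤ 4 ^ m * (|x - x'| / (T l - T (l - 1))) := by
  have hδ : 0 < T l - T (l - 1) := by linarith
  have he : 0 ≤ |x - x'| / (T l - T (l - 1)) := by positivity
  set e := |x - x'| / (T l - T (l - 1)) with hedef
  induction m, hm using Nat.le_induction with
  | base =>
    intro j
    by_cases hj : j < l ∨ l + (1 : ℕ) ≤ j
    · rw [bspl_zero T hT hT1 1 le_rfl l x hx hx' j hj, bspl_zero T hT hT1 1 le_rfl l x' hy hy' j hj]
      simp; positivity
    · have : j = l := by push_cast at hj; omega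
      subst this
      rw [Bspl, Bspl, if_pos ⟨hx, Or.inl hx'⟩, if_pos ⟨hy, Or.inl hy'⟩]
      simp; positivity
  | succ m hm ih =>
    intro j
    have hact : ∀ j : ℤ, ¬ (j < l ∨ l + m ≤ j) → T (j - m) ≤ T (l - 1) ∧ T l ≤ T j := by
      intro j hj
      exact ⟨hT (by omega), hT (by omega)⟩
    have a1 : ∀ j : ℤ, |(x - T (j - m)) / (T j - T (j - m)) * Bspl T m j x -
        (x' - T (j - m)) / (T j - T (j - m)) * Bspl T m j x'| ≤ (2 ^ m + 4 ^ m) * e := by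
      intro j
      by_cases hj : j < l ∨ l + m ≤ j
      · rw [bspl_zero T hT hT1 m hm l x hx hx' j hj, bspl_zero T hT hT1 m hm l x' hy hy' j hj]
        simp; positivity
      · obtain ⟨h1, h2⟩ := hact j hj
        apply lip_aux
        · rw [← sub_div, abs_div, abs_of_pos (show 0 < T j - T (j - m) by linarith)]
          rw [show x - T (j - m) - (x' - T (j - m)) = x - x' by ring]
          exact div_le_div_of_nonneg_left (abs_nonneg _) hδ (by linarith)
        · rw [abs_of_nonneg (div_nonneg (by linarith) (by linarith))]
          exact div_le_one_of_le₀ (by linarith) (by linarith)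
        · exact bspl_abs T hT hT1 x m hm j
        · exact ih j
        · exact he
    have a2 : ∀ j : ℤ, |(T j - x) / (T j - T (j - m)) * Bspl T m j x -
        (T j - x') / (T j - T (j - m)) * Bspl T m j x'| ≤ (2 ^ m + 4 ^ m) * e := by
      intro j
      by_cases hj : j < l ∨ l + m ≤ j
      · rw [bspl_zero T hT hT1 m hm l x hx hx' j hj, bspl_zero T hT hT1 m hm l x' hy hy' j hj]
        simp; positivity
      · obtain ⟨h1, h2⟩ := hact j hj
        apply lip_aux
        · rw [← sub_div, abs_div, abs_of_pos (show 0 < T j - T (j - m) by linarith)]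
          rw [show T j - x - (T j - x') = -(x - x') by ring, abs_neg]
          exact div_le_div_of_nonneg_left (abs_nonneg _) hδ (by linarith)
        · rw [abs_of_nonneg (div_nonneg (by linarith) (by linarith))]
          exact div_le_one_of_le₀ (by linarith) (by linarith)
        · exact bspl_abs T hT hT1 x m hm j
        · exact ih j
        · exact he
    rw [bspl_succ T m hm, bspl_succ T m hm]
    have := (abs_add_le _ _).trans (add_le_add (a1 (j - 1)) (a2 j))
    refine le_trans (le_of_eq ?_) (this.trans ?_)
    · congr 1; ring
    · have h24 : (2 : ℝ) ^ m ≤ 4 ^ m := pow_le_pow_left₀ (by norm_num) (by norm_num) m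
      have : (4:ℝ) ^ (m + 1) = 4 * 4 ^ m := by ring
      rw [this]
      nlinarith

lemma marsden (T : ℤ → ℝ) (hT : Monotone T) (hT1 : ∀ l, T l ≤ 1) (m : ℕ)
    (l : ℤ) (x y : ℝ) (hx : T (l - 1) ≤ x) (hx' : x < T l) :
    ∑ r ∈ Finset.range (m + 1), (∏ p ∈ Finset.range m, (y - T (l + r - 1 - p))) *
      Bspl T (m + 1) (l + r) x = (y - x) ^ m := by
  induction m with
  | zero =>
    rw [Finset.sum_range_one]
    simp [Bspl, hx, hx']
  | succ m ih =>
    have hm : 1 ≤ m + 1 := by omega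
    set ψ : ℕ → ℝ := fun r => ∏ p ∈ Finset.range (m + 1), (y - T (l + r - 1 - p)) with hψ
    have hz1 : Bspl T (m + 1) (l - 1) x = 0 :=
      bspl_zero T hT hT1 (m+1) hm l x hx hx' _ (by omega)
    have hz2 : Bspl T (m + 1) (l + ((m + 1 : ℕ) : ℤ)) x = 0 :=
      bspl_zero T hT hT1 (m+1) hm l x hx hx' _ (by omega)
    have e1 : ∑ r ∈ Finset.range (m + 1 + 1), ψ r * Bspl T (m + 1 + 1) (l + r) x =
        ∑ r ∈ Finset.range (m + 1 + 1), ψ r *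
          ((x - T (l + r - 1 - (m + 1 : ℕ))) / (T (l + r - 1) - T (l + r - 1 - (m + 1 : ℕ))) *
            Bspl T (m + 1) (l + r - 1) x) +
        ∑ r ∈ Finset.range (m + 1 + 1), ψ r *
          ((T (l + r) - x) / (T (l + r) - T (l + r - (m + 1 : ℕ))) *
            Bspl T (m + 1) (l + r) x) := by
      rw [← Finset.sum_add_distrib]
      refine Finset.sum_congr rfl fun r _ => ?_
      rw [bspl_succ T (m + 1) hm, mul_add]
    rw [e1, Finset.sum_range_succ', Finset.sum_range_succ _ (m + 1), hz2]
    simp only [Nat.cast_zero, add_zero, hz1, mul_zero]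
    rw [← Finset.sum_add_distrib, pow_succ, ← ih, Finset.sum_mul]
    refine Finset.sum_congr rfl fun r hr => ?_
    rw [Finset.mem_range] at hr
    have i1 : l + ((r + 1 : ℕ) : ℤ) - 1 = l + r := by push_cast; ring
    rw [i1]
    have h1 : T (l + r - (m + 1 : ℕ)) ≤ T (l - 1) := hT (by push_cast; omega)
    have h2 : T l ≤ T (l + r) := hT (by omega)
    have hD : T (l + r) - T (l + r - (m + 1 : ℕ)) ≠ 0 := by
      have : 0 < T (l + r) - T (l + r - (m + 1 : ℕ)) := by linarith
      exact this.ne'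
    have p1 : ψ (r + 1) = (∏ p ∈ Finset.range m, (y - T (l + r - 1 - p))) * (y - T (l + r)) := by
      simp only [hψ]
      rw [Finset.prod_range_succ']
      congr 1
      · refine Finset.prod_congr rfl fun p _ => ?_
        congr 2; push_cast; ring
      · congr 2; push_cast; ring
    have p2 : ψ r = (∏ p ∈ Finset.range m, (y - T (l + r - 1 - p))) * (y - T (l + r - (m + 1 : ℕ))) := by
      simp only [hψ]
      rw [Finset.prod_range_succ]
      congr 3; push_cast; ring
    rw [p1, p2]
    field_simp
    ring

/-! ### Dual functionals on one knot interval -/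

/-- The nodes used on the reference interval. -/
noncomputable def unode (q : ℕ) (k : Fin q) : ℝ := ((k : ℕ) + 1 : ℝ) / (q + 1)

lemma unode_inj (q : ℕ) : Function.Injective (unode q) := by
  intro a b h
  unfold unode at h
  have hq : (0 : ℝ) < q + 1 := by positivity
  rw [div_left_inj' hq.ne'] at h
  have : ((a : ℕ) : ℝ) = (b : ℕ) := by linarith
  exact Fin.ext (by exact_mod_cast this)

lemma unode_lower (q : ℕ) (k : Fin q) : 1 / ((q : ℝ) + 1) ≤ unode q k := by
  unfold unode
  gcongr
  linarith [Nat.cast_nonneg (α := ℝ) (k : ℕ)]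

lemma unode_upper (q : ℕ) (k : Fin q) : unode q k ≤ 1 - 1 / ((q : ℝ) + 1) := by
  unfold unode
  have hq : (0 : ℝ) < q + 1 := by positivity
  have : ((k : ℕ) : ℝ) + 1 ≤ q := by exact_mod_cast k.2
  rw [div_le_iff₀ hq, sub_mul, one_div, inv_mul_cancel₀ hq.ne']
  linarith

/-- The collocation matrix of the shifted powers. -/
noncomputable def Vmat (q : ℕ) : Matrix (Fin q) (Fin q) ℝ :=
  Matrix.of fun i k => (unode q i - unode q k) ^ (q - 1)

lemma Vmat_det (q : ℕ) (hq : 1 ≤ q) : (Vmat q).det ≠ 0 := by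
  obtain ⟨p, rfl⟩ : ∃ p, q = p + 1 := ⟨q - 1, by omega⟩
  have key : Vmat (p + 1) = Matrix.vandermonde (unode (p + 1)) *
      Matrix.diagonal (fun s : Fin (p + 1) => (Nat.choose p s : ℝ)) *
      ((Matrix.vandermonde (fun k => - unode (p + 1) k)).transpose.submatrix Fin.revPerm id) := by
    ext i k
    simp only [Vmat, Matrix.of_apply, Nat.add_sub_cancel]
    rw [Matrix.mul_apply, sub_eq_add_neg, add_pow, Finset.sum_range]
    refine Finset.sum_congr rfl fun s _ => ?_
    rw [Matrix.mul_diagonal]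
    simp [Matrix.vandermonde, Fin.val_rev]
    ring
  rw [key, Matrix.det_mul, Matrix.det_mul, Matrix.det_permute, Matrix.det_diagonal,
    Matrix.det_transpose]
  refine mul_ne_zero (mul_ne_zero ?_ ?_) (mul_ne_zero ?_ ?_)
  · exact Matrix.det_vandermonde_ne_zero_iff.mpr (unode_inj _)
  · refine Finset.prod_ne_zero_iff.mpr fun s _ => ?_
    have := Nat.choose_pos (show (s : ℕ) ≤ p by omega)
    exact_mod_cast this.ne'
  · rcases Int.units_eq_one_or (Equiv.Perm.sign (Fin.revPerm : Equiv.Perm (Fin (p + 1)))) with h | h <;>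
      simp [h]
  · refine Matrix.det_vandermonde_ne_zero_iff.mpr fun a b h => unode_inj _ ?_
    simpa using h

lemma dual_exists (q : ℕ) (hq : 1 ≤ q) (R : ℝ) :
    ∃ D : ℝ, 1 ≤ D ∧ ∀ (T : ℤ → ℝ), Monotone T → (∀ l, T l ≤ 1) → ∀ l : ℤ,
      0 < T l - T (l - 1) →
      (∀ i : ℤ, l - q ≤ i → i ≤ l + q → |T i - T (l - 1)| ≤ R * (T l - T (l - 1))) →
      ∃ M : Fin q → Fin q → ℝ,
        (∀ r r' : Fin q, ∑ m, M m r' * Bspl T q (l + (r : ℕ))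
          (T (l - 1) + (T l - T (l - 1)) * unode q m) = if r = r' then 1 else 0) ∧
        ∀ r', ∑ m, |M m r'| ≤ D := by
  refine ⟨max 1 (∑ m, ∑ i, |(Vmat q)⁻¹ m i| * (1 + R) ^ (q - 1)), le_max_left _ _, ?_⟩
  intro T hT hT1 l hδ hTR
  set δ := T l - T (l - 1) with hδd
  set Q : Matrix (Fin q) (Fin q) ℝ := Matrix.of fun i r =>
    ∏ p ∈ Finset.range (q - 1), (unode q i - (T (l + (r : ℕ) - 1 - p) - T (l - 1)) / δ) with hQ
  set Bz : Matrix (Fin q) (Fin q) ℝ := Matrix.of fun r m =>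
    Bspl T q (l + (r : ℕ)) (T (l - 1) + δ * unode q m) with hBz
  have hu : ∀ k : Fin q, 0 < unode q k ∧ unode q k < 1 := by
    intro k
    have h1 := unode_lower q k
    have h2 := unode_upper q k
    have : 0 < 1 / ((q : ℝ) + 1) := by positivity
    constructor <;> linarith
  have hV : Vmat q = Q * Bz := by
    ext i k
    obtain ⟨p, rfl⟩ : ∃ p, q = p + 1 := ⟨q - 1, by omega⟩
    have := marsden T hT hT1 p l (T (l - 1) + δ * unode _ k) (T (l - 1) + δ * unode _ i)
      (by nlinarith [(hu k).1]) (by nlinarith [(hu k).2])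
    rw [Finset.sum_range] at this
    rw [Matrix.mul_apply]
    simp only [Vmat, hQ, hBz, Matrix.of_apply, Nat.add_sub_cancel]
    have hδp : δ ^ p ≠ 0 := pow_ne_zero _ hδ.ne'
    apply mul_left_cancel₀ hδp
    rw [← mul_pow, Finset.mul_sum]
    rw [show δ * (unode (p+1) i - unode (p+1) k) =
      T (l - 1) + δ * unode _ i - (T (l - 1) + δ * unode _ k) by ring, ← this]
    refine Finset.sum_congr rfl fun r _ => ?_
    rw [← mul_assoc]
    congr 1
    have hc : δ ^ p = ∏ _s ∈ Finset.range p, δ := by simp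
    rw [hc, ← Finset.prod_mul_distrib]
    refine Finset.prod_congr rfl fun s _ => ?_
    field_simp
    ring
  have hinv : (Vmat q)⁻¹ * Q * Bz = 1 := by
    rw [Matrix.mul_assoc, ← hV]
    exact Matrix.nonsing_inv_mul _ (Vmat_det q hq).isUnit
  have hinv' := mul_eq_one_comm.mp hinv
  refine ⟨(Vmat q)⁻¹ * Q, ?_, ?_⟩
  · intro r r'
    have := congrFun (congrFun hinv' r) r'
    rw [Matrix.mul_apply, Matrix.one_apply] at this
    rw [← this]
    refine Finset.sum_congr rfl fun m _ => ?_
    rw [mul_comm]; rfl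
  · intro r'
    refine le_trans ?_ (le_max_right _ _)
    refine Finset.sum_le_sum fun m _ => ?_
    rw [Matrix.mul_apply]
    refine (Finset.abs_sum_le_sum_abs _ _).trans (Finset.sum_le_sum fun i _ => ?_)
    rw [abs_mul]
    refine mul_le_mul_of_nonneg_left ?_ (abs_nonneg _)
    simp only [hQ, Matrix.of_apply]
    rw [Finset.abs_prod]
    calc _ ≤ ∏ p ∈ Finset.range (q - 1), (1 + R) := by
          refine Finset.prod_le_prod (fun _ _ => abs_nonneg _) fun p hp => ?_
          rw [Finset.mem_range] at hp
          refine (abs_sub _ _).trans (add_le_add ?_ ?_)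
          · rw [abs_of_pos (hu i).1]; exact (hu i).2.le
          · rw [abs_div, abs_of_pos hδ, div_le_iff₀ hδ]
            have := r'.2
            exact hTR _ (by omega) (by omega)
      _ = _ := by simp

/-! ### Knot sequences -/

namespace KnotSeq

lemma T_nat (ks : KnotSeq) (l : ℕ) (hl : l ≤ ks.N + 1) : ks.T l = ks.t l := by
  unfold T
  split_ifs with h1 h2
  · have : l = 0 := by omega
    rw [this, ks.t0]
  · have : l = ks.N + 1 := by omega
    rw [this, ks.tN]
  · simp

lemma T_of_nonpos (ks : KnotSeq) (l : ℤ) (hl : l ≤ 0) : ks.T l = 0 := by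
  unfold T; rw [if_pos hl]

lemma T_of_ge (ks : KnotSeq) (l : ℤ) (hl : ks.N + 1 ≤ l) : ks.T l = 1 := by
  unfold T; rw [if_neg (by omega), if_pos hl]

lemma sub_le_mesh (ks : KnotSeq) (l : ℕ) (hl : l < ks.N + 1) : ks.t (l + 1) - ks.t l ≤ ks.mesh := by
  unfold mesh
  have := Finset.le_sup' (s := Finset.Icc 1 (ks.N + 1)) (fun l => ks.t l - ks.t (l - 1))
    (show l + 1 ∈ Finset.Icc 1 (ks.N + 1) by simp; omega)
  exact this

lemma mesh_pos (ks : KnotSeq) : 0 < ks.mesh := by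
  have := ks.sub_le_mesh 0 (by omega)
  linarith [ks.mono 0 (by omega)]

lemma T_step (ks : KnotSeq) (l : ℤ) : 0 ≤ ks.T (l + 1) - ks.T l ∧ ks.T (l + 1) - ks.T l ≤ ks.mesh := by
  have hm := ks.mesh_pos
  by_cases h0 : l < 0
  · rw [ks.T_of_nonpos l (by omega), ks.T_of_nonpos (l + 1) (by omega)]
    constructor <;> linarith
  · by_cases h1 : (ks.N : ℤ) + 1 ≤ l
    · rw [ks.T_of_ge l (by omega), ks.T_of_ge (l + 1) (by omega)]
      constructor <;> linarith
    · obtain ⟨p, rfl⟩ : ∃ p : ℕ, l = p := ⟨l.toNat, by omega⟩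
      have e : ((p : ℤ) + 1) = ((p + 1 : ℕ) : ℤ) := by push_cast; rfl
      rw [e, ks.T_nat p (by omega), ks.T_nat (p + 1) (by omega)]
      exact ⟨by linarith [ks.mono p (by omega)], ks.sub_le_mesh p (by omega)⟩

lemma T_mono (ks : KnotSeq) : Monotone ks.T :=
  monotone_int_of_le_succ fun l => by linarith [(ks.T_step l).1]

lemma T_le_one (ks : KnotSeq) (l : ℤ) : ks.T l ≤ 1 := by
  rw [← ks.T_of_ge (max l (ks.N + 1)) (le_max_right _ _)]
  exact ks.T_mono (le_max_left _ _)

lemma T_nonneg (ks : KnotSeq) (l : ℤ) : 0 ≤ ks.T l := by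
  rw [← ks.T_of_nonpos (min l 0) (min_le_right _ _)]
  exact ks.T_mono (min_le_left _ _)

lemma T_sub_le (ks : KnotSeq) (i : ℤ) (p : ℕ) : ks.T (i + p) - ks.T i ≤ p * ks.mesh := by
  induction p with
  | zero => simp
  | succ p ih =>
    have := (ks.T_step (i + p)).2
    push_cast
    rw [← add_assoc]
    linarith

lemma mesh_le_step (ks : KnotSeq) (C₀ : ℝ) (h : ks.QuasiUniform C₀) (l : ℕ) (hl : l < ks.N + 1) :
    ks.mesh ≤ C₀ * (ks.T (l + 1) - ks.T l) := by
  have e : ((l : ℤ) + 1) = ((l + 1 : ℕ) : ℤ) := by push_cast; rfl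
  rw [e, ks.T_nat l (by omega), ks.T_nat (l + 1) (by omega)]
  simpa using h (l + 1) (by simp; omega)

lemma one_le_mesh (ks : KnotSeq) : 1 ≤ (ks.N + 1) * ks.mesh := by
  have := ks.T_sub_le 0 (ks.N + 1)
  rw [ks.T_of_nonpos 0 le_rfl, ks.T_of_ge _ (by push_cast; omega)] at this
  push_cast at this
  linarith

lemma mesh_le (ks : KnotSeq) (C₀ : ℝ) (h : ks.QuasiUniform C₀) : (ks.N + 1) * ks.mesh ≤ C₀ := by
  have h1 : ∑ l ∈ Finset.range (ks.N + 1), ks.mesh ≤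
      ∑ l ∈ Finset.range (ks.N + 1), C₀ * (ks.t (l + 1) - ks.t l) := by
    refine Finset.sum_le_sum fun l hl => ?_
    rw [Finset.mem_range] at hl
    simpa using h (l + 1) (by simp; omega)
  rw [← Finset.mul_sum, Finset.sum_range_sub, ks.tN, ks.t0] at h1
  simpa using h1

end KnotSeq

/-! ### Counting design points in boxes -/

/-- The unit cube. -/
def ucube (d : ℕ) : Set (Fin d → ℝ) := Set.univ.pi fun _ : Fin d => Set.Icc (0 : ℝ) 1

/-- Indicator of the lower orthant. -/
noncomputable def oind {d : ℕ} (x y : Fin d → ℝ) : ℝ := if ∀ k, y k ≤ x k then 1 else 0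

/-- Indicator of a half-open box. -/
noncomputable def boxInd {d : ℕ} (α β y : Fin d → ℝ) : ℝ :=
  if ∀ k, α k < y k ∧ y k ≤ β k then 1 else 0

lemma ucube_meas (d : ℕ) : MeasurableSet (ucube d) :=
  MeasurableSet.univ_pi fun _ => measurableSet_Icc

lemma ucube_vol (d : ℕ) : volume (ucube d) ≠ ⊤ := by
  unfold ucube
  rw [volume_pi_pi]
  simp

lemma oind_set_meas {d : ℕ} (x : Fin d → ℝ) : MeasurableSet {y : Fin d → ℝ | ∀ k, y k ≤ x k} :=
  measurableSet_Iic (a := x)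

lemma boxInd_set {d : ℕ} (α β : Fin d → ℝ) :
    {y : Fin d → ℝ | ∀ k, α k < y k ∧ y k ≤ β k} = Set.univ.pi fun k => Set.Ioc (α k) (β k) := by
  ext y; simp [Set.mem_pi]

lemma boxInd_set_meas {d : ℕ} (α β : Fin d → ℝ) :
    MeasurableSet {y : Fin d → ℝ | ∀ k, α k < y k ∧ y k ≤ β k} := by
  rw [boxInd_set]
  exact MeasurableSet.univ_pi fun _ => measurableSet_Ioc

lemma oind_prod {d : ℕ} (x y : Fin d → ℝ) : oind x y = ∏ k, (if y k ≤ x k then (1 : ℝ) else 0) := by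
  unfold oind
  rw [Finset.prod_ite_zero]
  simp

lemma boxInd_prod {d : ℕ} (α β y : Fin d → ℝ) (h : ∀ k, α k ≤ β k) :
    boxInd α β y = ∏ k, ((if y k ≤ β k then (1 : ℝ) else 0) - (if y k ≤ α k then (1 : ℝ) else 0)) := by
  have : ∀ k, ((if y k ≤ β k then (1 : ℝ) else 0) - (if y k ≤ α k then (1 : ℝ) else 0)) =
      if α k < y k ∧ y k ≤ β k then 1 else 0 := by
    intro k
    have := h k
    by_cases h1 : y k ≤ α k
    · have h2 : y k ≤ β k := h1.trans this
      simp [h1, h2]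
    · have h1' : α k < y k := not_le.mp h1
      simp [h1, h1']
  simp only [this]
  unfold boxInd
  rw [Finset.prod_ite_zero]
  simp

lemma boxInd_expand {d : ℕ} (α β y : Fin d → ℝ) (h : ∀ k, α k ≤ β k) :
    boxInd α β y = ∑ t ∈ (Finset.univ : Finset (Fin d)).powerset,
      (-1 : ℝ) ^ t.card * oind (fun k => if k ∈ t then α k else β k) y := by
  rw [boxInd_prod α β y h, Finset.prod_sub]
  refine Finset.sum_congr rfl fun t _ => ?_
  rw [mul_assoc]
  congr 1
  rw [oind_prod]
  have : ∀ k, (if y k ≤ (if k ∈ t then α k else β k) then (1 : ℝ) else 0) =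
    if k ∈ t then (if y k ≤ α k then (1 : ℝ) else 0) else (if y k ≤ β k then (1 : ℝ) else 0) := by
    intro k; split_ifs <;> rfl
  simp only [this]
  rw [← Finset.prod_sdiff (Finset.subset_univ t)]
  congr 1
  · refine Finset.prod_congr rfl fun k hk => ?_
    rw [if_neg (Finset.mem_sdiff.mp hk).2]
  · refine Finset.prod_congr rfl fun k hk => ?_
    rw [if_pos hk]

lemma g_int {d : ℕ} (g : (Fin d → ℝ) → ℝ) (hg : Measurable g) (Kmin Kmax : ℝ) (hK : 0 < Kmin)
    (hg1 : ∀ y ∈ ucube d, Kmin ≤ g y) (hg2 : ∀ y ∈ ucube d, g y ≤ Kmax) : IntegrableOn g (ucube d) := by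
  refine Measure.integrableOn_of_bounded (M := Kmax) (ucube_vol d) hg.aestronglyMeasurable ?_
  refine (ae_restrict_iff' (ucube_meas d)).mpr (Filter.Eventually.of_forall fun y hy => ?_)
  rw [Real.norm_eq_abs, abs_of_nonneg (by linarith [hg1 y hy])]
  exact hg2 y hy

lemma oind_mul_eq {d : ℕ} (g : (Fin d → ℝ) → ℝ) (x y : Fin d → ℝ) : oind x y * g y = {y : Fin d → ℝ | ∀ k, y k ≤ x k}.indicator g y := by
  unfold oind
  rw [Set.indicator_apply]
  simp only [Set.mem_ofPred_eq]
  split_ifs <;> simp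

lemma boxInd_mul_eq {d : ℕ} (g : (Fin d → ℝ) → ℝ) (α β y : Fin d → ℝ) : boxInd α β y * g y =
    {y : Fin d → ℝ | ∀ k, α k < y k ∧ y k ≤ β k}.indicator g y := by
  unfold boxInd
  rw [Set.indicator_apply]
  simp only [Set.mem_ofPred_eq]
  split_ifs <;> simp

lemma ext_hyp {d n : ℕ} (X : Fin n → Fin d → ℝ) (hX : ∀ i k, X i k ∈ Set.Icc (0 : ℝ) 1)
    (g : (Fin d → ℝ) → ℝ) (E : ℝ) (hE : 0 ≤ E)
    (hG : ∀ x ∈ ucube d, |(n : ℝ)⁻¹ * (∑ i, oind x (X i)) -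
      ∫ y in Set.univ.pi fun k => Set.Icc 0 (x k), g y| ≤ E)
    (x : Fin d → ℝ) (hx : ∀ k, x k ≤ 1) :
    |(n : ℝ)⁻¹ * (∑ i, oind x (X i)) - ∫ y in ucube d, oind x y * g y| ≤ E := by
  have e : ∫ y in ucube d, oind x y * g y = ∫ y in Set.univ.pi fun k => Set.Icc 0 (x k), g y := by
    simp only [oind_mul_eq g x]
    rw [setIntegral_indicator (oind_set_meas x)]
    congr 2
    ext y
    simp only [ucube, Set.mem_inter_iff, Set.mem_pi, Set.mem_univ, true_imp_iff, Set.mem_Icc,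
      Set.mem_ofPred_eq]
    constructor
    · rintro ⟨h1, h2⟩ k; exact ⟨(h1 k).1, h2 k⟩
    · intro h; exact ⟨fun k => ⟨(h k).1, (h k).2.trans (hx k)⟩, fun k => (h k).2⟩
  rw [e]
  by_cases h : ∀ k, 0 ≤ x k
  · exact hG x (by intro k _; exact ⟨h k, hx k⟩)
  · push Not at h
    obtain ⟨k, hk⟩ := h
    have h1 : (Set.univ.pi fun k => Set.Icc 0 (x k)) = ∅ := by
      rw [Set.univ_pi_eq_empty_iff]
      exact ⟨k, Set.Icc_eq_empty (by linarith)⟩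
    have h2 : ∑ i, oind x (X i) = 0 := by
      refine Finset.sum_eq_zero fun i _ => ?_
      unfold oind
      rw [if_neg]
      intro h3
      linarith [h3 k, (hX i k).1]
    rw [h1, h2]
    simpa using hE

lemma count_box {d n : ℕ} (X : Fin n → Fin d → ℝ) (hX : ∀ i k, X i k ∈ Set.Icc (0 : ℝ) 1)
    (g : (Fin d → ℝ) → ℝ) (hg : Measurable g) (Kmin Kmax : ℝ) (hK : 0 < Kmin)
    (hg1 : ∀ y ∈ ucube d, Kmin ≤ g y) (hg2 : ∀ y ∈ ucube d, g y ≤ Kmax)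
    (E : ℝ) (hE : 0 ≤ E)
    (hG : ∀ x ∈ ucube d, |(n : ℝ)⁻¹ * (∑ i, oind x (X i)) -
      ∫ y in Set.univ.pi fun k => Set.Icc 0 (x k), g y| ≤ E)
    (α β : Fin d → ℝ) (h : ∀ k, α k ≤ β k) (hβ : ∀ k, β k ≤ 1) :
    |(n : ℝ)⁻¹ * (∑ i, boxInd α β (X i)) - ∫ y in ucube d, boxInd α β y * g y| ≤ 2 ^ d * E := by
  have hint := g_int g hg Kmin Kmax hK hg1 hg2
  simp only [boxInd_expand α β _ h]
  rw [Finset.sum_comm]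
  simp only [Finset.sum_mul]
  rw [integral_finsetSum]
  · rw [Finset.mul_sum, ← Finset.sum_sub_distrib]
    refine (Finset.abs_sum_le_sum_abs _ _).trans ?_
    calc _ ≤ ∑ t ∈ (Finset.univ : Finset (Fin d)).powerset, E := by
          refine Finset.sum_le_sum fun t _ => ?_
          have := ext_hyp X hX g E hE hG (fun k => if k ∈ t then α k else β k) (fun k => by
            split_ifs
            · exact (h k).trans (hβ k)
            · exact hβ k)
          rw [← Finset.mul_sum]
          simp only [mul_assoc]
          rw [integral_const_mul, mul_left_comm, ← mul_sub, abs_mul, abs_pow]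
          simpa using this
      _ = _ := by simp
  · intro t _
    simp only [mul_assoc]
    refine Integrable.const_mul ?_ _
    simp only [oind_mul_eq g _]
    exact hint.indicator (oind_set_meas _)

lemma count_lower {d n : ℕ} (X : Fin n → Fin d → ℝ) (hX : ∀ i k, X i k ∈ Set.Icc (0 : ℝ) 1)
    (g : (Fin d → ℝ) → ℝ) (hg : Measurable g) (Kmin Kmax : ℝ) (hK : 0 < Kmin)
    (hg1 : ∀ y ∈ ucube d, Kmin ≤ g y) (hg2 : ∀ y ∈ ucube d, g y ≤ Kmax)
    (E : ℝ) (hE : 0 ≤ E)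
    (hG : ∀ x ∈ ucube d, |(n : ℝ)⁻¹ * (∑ i, oind x (X i)) -
      ∫ y in Set.univ.pi fun k => Set.Icc 0 (x k), g y| ≤ E)
    (α β : Fin d → ℝ) (h : ∀ k, α k ≤ β k) (hβ : ∀ k, β k ≤ 1) (hα : ∀ k, 0 ≤ α k) :
    n * (Kmin * ∏ k, (β k - α k) - 2 ^ d * E) ≤ ∑ i, boxInd α β (X i) := by
  have hint := g_int g hg Kmin Kmax hK hg1 hg2
  rcases Nat.eq_zero_or_pos n with rfl | hn
  · simp
  have hn' : (0 : ℝ) < n := by exact_mod_cast hn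
  have hb := (abs_le.mp (count_box X hX g hg Kmin Kmax hK hg1 hg2 E hE hG α β h hβ)).1
  have hI : Kmin * ∏ k, (β k - α k) ≤ ∫ y in ucube d, boxInd α β y * g y := by
    simp only [boxInd_mul_eq g α β]
    rw [setIntegral_indicator (boxInd_set_meas α β), boxInd_set]
    have hsub : (Set.univ.pi fun k => Set.Ioc (α k) (β k)) ⊆ ucube d := by
      intro y hy k _
      have := hy k (Set.mem_univ k)
      exact ⟨(hα k).trans this.1.le, this.2.trans (hβ k)⟩
    rw [Set.inter_eq_self_of_subset_right hsub]
    have hvol : (volume (Set.univ.pi fun k => Set.Ioc (α k) (β k))).toReal = ∏ k, (β k - α k) :=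
      Real.volume_pi_Ioc_toReal h
    calc Kmin * ∏ k, (β k - α k) = ∫ y in Set.univ.pi fun k => Set.Ioc (α k) (β k), Kmin := by
          rw [setIntegral_const, measureReal_def, hvol, smul_eq_mul, mul_comm]
      _ ≤ _ := by
          refine setIntegral_mono_on ?_ (hint.mono_set hsub)
            (MeasurableSet.univ_pi fun _ => measurableSet_Ioc) fun y hy => hg1 y (hsub hy)
          exact integrableOn_const (ne_top_of_le_ne_top (ucube_vol d) (measure_mono hsub))
  have h3 : Kmin * ∏ k, (β k - α k) - 2 ^ d * E ≤ (n : ℝ)⁻¹ * (∑ i, boxInd α β (X i)) := by linarith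
  rw [inv_mul_eq_div, le_div_iff₀ hn'] at h3
  linarith

lemma count_upper {d n : ℕ} (X : Fin n → Fin d → ℝ) (hX : ∀ i k, X i k ∈ Set.Icc (0 : ℝ) 1)
    (g : (Fin d → ℝ) → ℝ) (hg : Measurable g) (Kmin Kmax : ℝ) (hK : 0 < Kmin)
    (hg1 : ∀ y ∈ ucube d, Kmin ≤ g y) (hg2 : ∀ y ∈ ucube d, g y ≤ Kmax)
    (E : ℝ) (hE : 0 ≤ E)
    (hG : ∀ x ∈ ucube d, |(n : ℝ)⁻¹ * (∑ i, oind x (X i)) -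
      ∫ y in Set.univ.pi fun k => Set.Icc 0 (x k), g y| ≤ E)
    (hKm : 0 ≤ Kmax) (α β : Fin d → ℝ) (h : ∀ k, α k ≤ β k) (hβ : ∀ k, β k ≤ 1) :
    ∑ i, boxInd α β (X i) ≤ n * (Kmax * ∏ k, (β k - α k) + 2 ^ d * E) := by
  have hint := g_int g hg Kmin Kmax hK hg1 hg2
  rcases Nat.eq_zero_or_pos n with rfl | hn
  · simp
  have hn' : (0 : ℝ) < n := by exact_mod_cast hn
  have hb := (abs_le.mp (count_box X hX g hg Kmin Kmax hK hg1 hg2 E hE hG α β h hβ)).2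
  have hI : ∫ y in ucube d, boxInd α β y * g y ≤ Kmax * ∏ k, (β k - α k) := by
    simp only [boxInd_mul_eq g α β]
    rw [setIntegral_indicator (boxInd_set_meas α β), boxInd_set]
    set P := (Set.univ.pi fun k => Set.Ioc (α k) (β k)) with hP
    have hsub : ucube d ∩ P ⊆ ucube d := Set.inter_subset_left
    have hvol : (volume P).toReal = ∏ k, (β k - α k) :=
      Real.volume_pi_Ioc_toReal h
    have hPm : MeasurableSet P := MeasurableSet.univ_pi fun _ => measurableSet_Ioc
    have hPv : volume P ≠ ⊤ := by
      rw [hP, Real.volume_pi_Ioc]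
      exact ENNReal.prod_ne_top fun _ _ => ENNReal.ofReal_ne_top
    calc _ ≤ ∫ y in ucube d ∩ P, Kmax := by
          refine setIntegral_mono_on (hint.mono_set hsub) ?_
            ((ucube_meas d).inter hPm) fun y hy => hg2 y (hsub hy)
          exact integrableOn_const (ne_top_of_le_ne_top (ucube_vol d) (measure_mono hsub))
      _ ≤ Kmax * ∏ k, (β k - α k) := by
          rw [setIntegral_const, smul_eq_mul, mul_comm, ← hvol]
          refine mul_le_mul_of_nonneg_left ?_ hKm
          exact ENNReal.toReal_mono hPv (measure_mono Set.inter_subset_right)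
  have h3 : (n : ℝ)⁻¹ * (∑ i, boxInd α β (X i)) ≤ Kmax * ∏ k, (β k - α k) + 2 ^ d * E := by linarith
  rw [inv_mul_eq_div, div_le_iff₀ hn'] at h3
  linarith

/-! ### Local stability of tensor products -/

lemma prod_diff {ι : Type*} (s : Finset ι) (a b : ι → ℝ) (A e : ℝ) (hA : 1 ≤ A) (he : 0 ≤ e)
    (ha : ∀ k, |a k| ≤ A) (hb : ∀ k, |b k| ≤ A) (hab : ∀ k, |a k - b k| ≤ e) :
    |∏ k ∈ s, a k - ∏ k ∈ s, b k| ≤ s.card * A ^ s.card * e := by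
  induction s using Finset.induction_on with
  | empty => simp
  | insert k s hk ih =>
    rw [Finset.prod_insert hk, Finset.prod_insert hk, Finset.card_insert_of_notMem hk]
    have e1 : a k * ∏ k ∈ s, a k - b k * ∏ k ∈ s, b k =
      a k * (∏ k ∈ s, a k - ∏ k ∈ s, b k) + (a k - b k) * ∏ k ∈ s, b k := by ring
    rw [e1]
    refine (abs_add_le _ _).trans ?_
    rw [abs_mul, abs_mul]
    have h1 : |∏ k ∈ s, b k| ≤ A ^ s.card := by
      rw [Finset.abs_prod]
      calc _ ≤ ∏ _k ∈ s, A := Finset.prod_le_prod (fun _ _ => abs_nonneg _) fun k _ => hb k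
        _ = _ := by simp
    have hA0 : 0 ≤ A := by linarith
    have h2 : |a k| * |∏ k ∈ s, a k - ∏ k ∈ s, b k| ≤ A * (s.card * A ^ s.card * e) :=
      mul_le_mul (ha k) ih (abs_nonneg _) hA0
    have h3 : |a k - b k| * |∏ k ∈ s, b k| ≤ e * A ^ s.card :=
      mul_le_mul (hab k) h1 (abs_nonneg _) he
    have h4 : A ^ s.card ≤ A ^ (s.card + 1) := pow_le_pow_right₀ hA (Nat.le_succ _)
    have h5 : e * A ^ s.card ≤ e * A ^ (s.card + 1) := mul_le_mul_of_nonneg_left h4 he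
    push_cast
    calc _ ≤ A * (s.card * A ^ s.card * e) + e * A ^ (s.card + 1) := by linarith
      _ = _ := by ring

lemma local_stab {d : ℕ} (q : Fin d → ℕ) (hq : ∀ k, 1 ≤ q k) (b : (k : Fin d) → Fin (q k) → ℝ → ℝ)
    (z : (k : Fin d) → Fin (q k) → ℝ) (M : (k : Fin d) → Fin (q k) → Fin (q k) → ℝ)
    (D A e : ℝ) (hD : 1 ≤ D) (hA : 1 ≤ A) (he : 0 ≤ e)
    (hdual : ∀ k r r', ∑ m, M k m r' * b k r (z k m) = if r = r' then 1 else 0)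
    (hM : ∀ k r', ∑ m, |M k m r'| ≤ D) (hb : ∀ k r x, |b k r x| ≤ A)
    (hκ : D ^ d * ((∏ k, (q k : ℝ)) * (d * A ^ d * e)) ≤ 1 / 2)
    (θ : ((k : Fin d) → Fin (q k)) → ℝ) :
    ∃ m : (k : Fin d) → Fin (q k), ∀ x : Fin d → ℝ,
      (∀ k r, |b k r (x k) - b k r (z k (m k))| ≤ e) → ∀ r,
        θ r ^ 2 ≤ (2 * D ^ d) ^ 2 * (∑ r, θ r * ∏ k, b k (r k) (x k)) ^ 2 := by
  have hne : Nonempty ((k : Fin d) → Fin (q k)) := ⟨fun k => ⟨0, hq k⟩⟩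
  set s : (Fin d → ℝ) → ℝ := fun y => ∑ r, θ r * ∏ k, b k (r k) (y k) with hs
  obtain ⟨rs, hrs⟩ := Finite.exists_max (fun r => |θ r|)
  obtain ⟨m, hm⟩ := Finite.exists_max
    (fun m : (k : Fin d) → Fin (q k) => |s (fun k => z k (m k))|)
  have hrep : θ rs = ∑ m : (k : Fin d) → Fin (q k),
      (∏ k, M k (m k) (rs k)) * s (fun k => z k (m k)) := by
    simp only [hs, Finset.mul_sum]
    rw [Finset.sum_comm]
    have : ∀ r : (k : Fin d) → Fin (q k),
        ∑ m : (k : Fin d) → Fin (q k),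
          (∏ k, M k (m k) (rs k)) * (θ r * ∏ k, b k (r k) (z k (m k))) =
        θ r * if r = rs then 1 else 0 := by
      intro r
      have h1 : ∏ k, ∑ m, M k m (rs k) * b k (r k) (z k m) = if r = rs then (1 : ℝ) else 0 := by
        simp only [hdual]
        rw [Finset.prod_ite_zero]
        simp [funext_iff]
      rw [← h1, Finset.prod_univ_sum, Fintype.piFinset_univ, Finset.mul_sum]
      refine Finset.sum_congr rfl fun m _ => ?_
      rw [Finset.prod_mul_distrib]
      ring
    rw [Finset.sum_congr rfl fun r _ => this r]
    simp
  have hub : |θ rs| ≤ D ^ d * |s (fun k => z k (m k))| := by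
    rw [hrep]
    refine (Finset.abs_sum_le_sum_abs _ _).trans ?_
    calc _ ≤ ∑ m' : (k : Fin d) → Fin (q k),
          (∏ k, |M k (m' k) (rs k)|) * |s (fun k => z k (m k))| := by
          refine Finset.sum_le_sum fun m' _ => ?_
          rw [abs_mul, Finset.abs_prod]
          exact mul_le_mul_of_nonneg_left (hm m') (Finset.prod_nonneg fun _ _ => abs_nonneg _)
      _ = (∏ k, ∑ m', |M k m' (rs k)|) * |s (fun k => z k (m k))| := by
          rw [Finset.prod_univ_sum, Fintype.piFinset_univ, Finset.sum_mul]
      _ ≤ _ := by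
          refine mul_le_mul_of_nonneg_right ?_ (abs_nonneg _)
          calc _ ≤ ∏ _k : Fin d, D := Finset.prod_le_prod
                (fun _ _ => Finset.sum_nonneg fun _ _ => abs_nonneg _) fun k _ => hM k _
            _ = _ := by simp
  refine ⟨m, fun x hx r => ?_⟩
  have hdiff : |s x - s (fun k => z k (m k))| ≤ |θ rs| * ((∏ k, (q k : ℝ)) * (d * A ^ d * e)) := by
    simp only [hs]
    rw [← Finset.sum_sub_distrib]
    refine (Finset.abs_sum_le_sum_abs _ _).trans ?_
    calc _ ≤ ∑ r : (k : Fin d) → Fin (q k), |θ rs| * (d * A ^ d * e) := by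
          refine Finset.sum_le_sum fun r _ => ?_
          rw [← mul_sub, abs_mul]
          refine mul_le_mul (hrs r) ?_ (abs_nonneg _) (abs_nonneg _)
          have := prod_diff Finset.univ (fun k => b k (r k) (x k))
            (fun k => b k (r k) (z k (m k))) A e hA he (fun k => hb _ _ _) (fun k => hb _ _ _)
            (fun k => hx k (r k))
          simpa using this
      _ = _ := by
          simp only [Finset.sum_const, Finset.card_univ, Fintype.card_pi, Fintype.card_fin,
            nsmul_eq_mul, Nat.cast_prod]
          ring
  have hDd : 0 < D ^ d := by positivity
  have h1 : |s (fun k => z k (m k))| ≤ |s x| + |s x - s (fun k => z k (m k))| := by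
    have := abs_sub_abs_le_abs_sub (s (fun k => z k (m k))) (s x)
    rw [abs_sub_comm] at this
    linarith
  have h2 : D ^ d * |s x - s (fun k => z k (m k))| ≤ |θ rs| * (1 / 2) := by
    calc _ ≤ D ^ d * (|θ rs| * ((∏ k, (q k : ℝ)) * (d * A ^ d * e))) :=
          mul_le_mul_of_nonneg_left hdiff hDd.le
      _ = |θ rs| * (D ^ d * ((∏ k, (q k : ℝ)) * (d * A ^ d * e))) := by ring
      _ ≤ _ := mul_le_mul_of_nonneg_left hκ (abs_nonneg _)
  have h3 : |θ rs| ≤ 2 * D ^ d * |s x| := by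
    have := mul_le_mul_of_nonneg_left h1 hDd.le
    nlinarith
  have h4 : |θ r| ≤ 2 * D ^ d * |s x| := (hrs r).trans h3
  calc θ r ^ 2 = |θ r| ^ 2 := (sq_abs _).symm
    _ ≤ (2 * D ^ d * |s x|) ^ 2 := pow_le_pow_left₀ (abs_nonneg _) h4 2
    _ = _ := by rw [mul_pow, sq_abs]

/-! ### The two bounds -/

/-- The tensor-product basis function. -/
noncomputable def tb {d : ℕ} (ks : Fin d → KnotSeq) (q : Fin d → ℕ)
    (j : (k : Fin d) → Fin ((ks k).N + q k)) (x : Fin d → ℝ) : ℝ :=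
  ∏ k, Bspl (ks k).T (q k) (((j k : ℕ) : ℤ) + 1) (x k)

/-- The spline with coefficients `θ`. -/
noncomputable def spl {d : ℕ} (ks : Fin d → KnotSeq) (q : Fin d → ℕ)
    (θ : ((k : Fin d) → Fin ((ks k).N + q k)) → ℝ) (x : Fin d → ℝ) : ℝ :=
  ∑ j, θ j * tb ks q j x

lemma tb_sum {d : ℕ} (ks : Fin d → KnotSeq) (q : Fin d → ℕ) (hq : ∀ k, 1 ≤ q k) (x : Fin d → ℝ) :
    ∑ j, |tb ks q j x| ≤ ∏ k, (2 : ℝ) ^ q k := by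
  unfold tb
  simp only [Finset.abs_prod]
  have := Finset.prod_univ_sum (fun k : Fin d => (Finset.univ : Finset (Fin ((ks k).N + q k))))
    (fun k j => |Bspl (ks k).T (q k) (((j : ℕ) : ℤ) + 1) (x k)|)
  rw [Fintype.piFinset_univ] at this
  rw [← this]
  refine Finset.prod_le_prod (fun _ _ => Finset.sum_nonneg fun _ _ => abs_nonneg _) fun k _ => ?_
  let em : Fin ((ks k).N + q k) ↪ ℤ := ⟨fun j => ((j : ℕ) : ℤ) + 1, fun a b h => by
    ext; simpa using h⟩
  have h := bspl_sum (ks k).T (ks k).T_mono (ks k).T_le_one (x k) (q k) (hq k)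
    ((Finset.univ : Finset (Fin ((ks k).N + q k))).map em)
  rw [Finset.sum_map] at h
  exact h

lemma boxInd_nonneg {d : ℕ} (α β y : Fin d → ℝ) : 0 ≤ boxInd α β y := by
  unfold boxInd; split_ifs <;> simp

lemma tb_le_box {d : ℕ} (ks : Fin d → KnotSeq) (q : Fin d → ℕ) (hq : ∀ k, 1 ≤ q k)
    (j : (k : Fin d) → Fin ((ks k).N + q k)) (x : Fin d → ℝ) :
    |tb ks q j x| ≤ (∏ k, (2 : ℝ) ^ q k) * boxInd
      (fun k => (ks k).T (((j k : ℕ) : ℤ) + 1 - q k) - (ks k).mesh)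
      (fun k => (ks k).T (((j k : ℕ) : ℤ) + 1)) x := by
  by_cases h : tb ks q j x = 0
  · rw [h, abs_zero]
    exact mul_nonneg (Finset.prod_nonneg fun _ _ => by positivity) (boxInd_nonneg _ _ _)
  · have h' := h
    unfold tb at h'
    rw [← ne_eq, Finset.prod_ne_zero_iff] at h'
    unfold boxInd
    rw [if_pos, mul_one]
    · exact (Finset.single_le_sum (f := fun j => |tb ks q j x|) (fun _ _ => abs_nonneg _)
        (Finset.mem_univ j)).trans (tb_sum ks q hq x)
    · intro k
      have := bspl_supp (ks k).T (ks k).T_mono (q k) (hq k) _ _ (h' k (Finset.mem_univ k))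
      exact ⟨by linarith [this.1, (ks k).mesh_pos], this.2⟩

lemma invN_le (N : ℕ) : ((N : ℝ))⁻¹ ≤ 2 * ((N : ℝ) + 1)⁻¹ := by
  rcases Nat.eq_zero_or_pos N with rfl | h
  · simp
  · have : (1 : ℝ) ≤ N := by exact_mod_cast h
    rw [← div_eq_mul_inv, inv_eq_one_div, div_le_div_iff₀ (by linarith) (by linarith)]
    linarith

lemma prod_invN_le {d : ℕ} (N : Fin d → ℕ) :
    ∏ k, ((N k : ℝ))⁻¹ ≤ 2 ^ d * ∏ k, ((N k : ℝ) + 1)⁻¹ := by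
  calc _ ≤ ∏ k, 2 * ((N k : ℝ) + 1)⁻¹ :=
        Finset.prod_le_prod (fun _ _ => by positivity) fun k _ => invN_le _
    _ = _ := by rw [Finset.prod_mul_distrib]; simp

lemma upper_bound {d n : ℕ} (ks : Fin d → KnotSeq) (q : Fin d → ℕ) (hq : ∀ k, 1 ≤ q k)
    (C₀ : ℝ) (hC₀ : 1 ≤ C₀) (hks : ∀ k, (ks k).QuasiUniform C₀)
    (X : Fin n → Fin d → ℝ) (hX : ∀ i k, X i k ∈ Set.Icc (0 : ℝ) 1)
    (g : (Fin d → ℝ) → ℝ) (hg : Measurable g) (Kmin Kmax : ℝ) (hK : 0 < Kmin) (hKm : 0 ≤ Kmax)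
    (hg1 : ∀ y ∈ ucube d, Kmin ≤ g y) (hg2 : ∀ y ∈ ucube d, g y ≤ Kmax)
    (ε : ℝ) (hε : 0 ≤ ε) (hε1 : ε ≤ 1)
    (hG : ∀ x ∈ ucube d, |(n : ℝ)⁻¹ * (∑ i, oind x (X i)) -
      ∫ y in Set.univ.pi fun k => Set.Icc 0 (x k), g y| ≤ ε * ∏ k, ((ks k).N : ℝ)⁻¹)
    (θ : ((k : Fin d) → Fin ((ks k).N + q k)) → ℝ) :
    ∑ i, spl ks q θ (X i) ^ 2 ≤
      ((∏ k, (2 : ℝ) ^ q k) ^ 2 * (Kmax * ∏ k, (((q k : ℝ) + 1) * C₀) + 4 ^ d) * ∏ k, (q k : ℝ)) *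
        n * (∏ k, (((ks k).N + q k : ℕ) : ℝ)⁻¹) * ∑ j, θ j ^ 2 := by
  set A : ℝ := ∏ k, (2 : ℝ) ^ q k with hA
  have hA0 : 0 ≤ A := Finset.prod_nonneg fun _ _ => by positivity
  set P : ℝ := ∏ k, (((ks k).N : ℝ) + 1)⁻¹ with hP
  set PJ : ℝ := ∏ k, (((ks k).N + q k : ℕ) : ℝ)⁻¹ with hPJ
  set K2 : ℝ := Kmax * ∏ k, (((q k : ℝ) + 1) * C₀) + 4 ^ d with hK2
  have hK20 : 0 ≤ K2 := by
    refine add_nonneg (mul_nonneg hKm (Finset.prod_nonneg fun _ _ => ?_)) (by positivity)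
    exact mul_nonneg (by positivity) (by linarith)
  have hPP : P ≤ (∏ k, (q k : ℝ)) * PJ := by
    rw [hP, hPJ, ← Finset.prod_mul_distrib]
    refine Finset.prod_le_prod (fun _ _ => by positivity) fun k _ => ?_
    have h1 : (1 : ℝ) ≤ q k := by exact_mod_cast hq k
    have h2 : (0 : ℝ) ≤ (ks k).N := Nat.cast_nonneg _
    push_cast
    rw [← div_eq_mul_inv, inv_eq_one_div, div_le_div_iff₀ (by linarith) (by linarith)]
    nlinarith
  have hE0 : 0 ≤ ε * ∏ k, ((ks k).N : ℝ)⁻¹ :=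
    mul_nonneg hε (Finset.prod_nonneg fun _ _ => by positivity)
  -- the count for each basis function
  have hcount : ∀ j : (k : Fin d) → Fin ((ks k).N + q k),
      ∑ i, |tb ks q j (X i)| ≤ A * (n * (K2 * P)) := by
    intro j
    set α : Fin d → ℝ := fun k => (ks k).T (((j k : ℕ) : ℤ) + 1 - q k) - (ks k).mesh with hα
    set β : Fin d → ℝ := fun k => (ks k).T (((j k : ℕ) : ℤ) + 1) with hβ
    have hαβ : ∀ k, α k ≤ β k := fun k => by
      have := (ks k).T_mono (show ((j k : ℕ) : ℤ) + 1 - q k ≤ ((j k : ℕ) : ℤ) + 1 by omega)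
      simp only [hα, hβ]
      linarith [(ks k).mesh_pos]
    have hc := count_upper X hX g hg Kmin Kmax hK hg1 hg2 _ hE0 hG hKm α β hαβ
      (fun k => (ks k).T_le_one _)
    have hlen : ∏ k, (β k - α k) ≤ (∏ k, (((q k : ℝ) + 1) * C₀)) * P := by
      rw [hP, ← Finset.prod_mul_distrib]
      refine Finset.prod_le_prod (fun k _ => by linarith [hαβ k]) fun k _ => ?_
      have h1 := (ks k).T_sub_le (((j k : ℕ) : ℤ) + 1 - q k) (q k)
      rw [sub_add_cancel] at h1
      have h2 := (ks k).mesh_le C₀ (hks k)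
      have h3 : (0 : ℝ) < (ks k).N + 1 := by positivity
      have h4 : (ks k).mesh ≤ C₀ * (((ks k).N : ℝ) + 1)⁻¹ := by
        rw [← div_eq_mul_inv, le_div_iff₀ h3]; linarith
      have h5 : (0 : ℝ) ≤ (q k : ℝ) + 1 := by positivity
      simp only [hα, hβ]
      calc _ ≤ ((q k : ℝ) + 1) * (ks k).mesh := by linarith
        _ ≤ ((q k : ℝ) + 1) * (C₀ * (((ks k).N : ℝ) + 1)⁻¹) := mul_le_mul_of_nonneg_left h4 h5
        _ = _ := by ring
    have hE1 : ε * ∏ k, ((ks k).N : ℝ)⁻¹ ≤ 2 ^ d * P := by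
      calc _ ≤ 1 * ∏ k, ((ks k).N : ℝ)⁻¹ :=
            mul_le_mul_of_nonneg_right hε1 (Finset.prod_nonneg fun _ _ => by positivity)
        _ ≤ _ := by rw [one_mul]; exact prod_invN_le _
    calc ∑ i, |tb ks q j (X i)| ≤ ∑ i, A * boxInd α β (X i) :=
          Finset.sum_le_sum fun i _ => tb_le_box ks q hq j (X i)
      _ = A * ∑ i, boxInd α β (X i) := by rw [Finset.mul_sum]
      _ ≤ A * (n * (K2 * P)) := by
          refine mul_le_mul_of_nonneg_left (hc.trans ?_) hA0
          refine mul_le_mul_of_nonneg_left ?_ (Nat.cast_nonneg _)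
          have h6 := mul_le_mul_of_nonneg_left hlen hKm
          have h7 := mul_le_mul_of_nonneg_left hE1 (show (0 : ℝ) ≤ 2 ^ d by positivity)
          have h8 : (2 : ℝ) ^ d * (2 ^ d * P) = 4 ^ d * P := by
            rw [← mul_assoc, ← mul_pow]; norm_num
          rw [hK2, add_mul, mul_assoc]
          linarith
  have hpt : ∀ x, spl ks q θ x ^ 2 ≤ A * ∑ j, θ j ^ 2 * |tb ks q j x| := by
    intro x
    have h1 : spl ks q θ x ^ 2 ≤ (∑ j, |tb ks q j x|) * ∑ j, θ j ^ 2 * |tb ks q j x| := by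
      unfold spl
      refine Finset.sum_sq_le_sum_mul_sum_of_sq_le_mul _ (fun _ _ => abs_nonneg _)
        (fun _ _ => by positivity) fun j _ => ?_
      rw [mul_pow, ← sq_abs (tb ks q j x)]; exact le_of_eq (by ring)
    exact h1.trans (mul_le_mul_of_nonneg_right (tb_sum ks q hq x)
      (Finset.sum_nonneg fun _ _ => by positivity))
  calc ∑ i, spl ks q θ (X i) ^ 2 ≤ ∑ i, A * ∑ j, θ j ^ 2 * |tb ks q j (X i)| :=
        Finset.sum_le_sum fun i _ => hpt _
    _ = A * ∑ j, θ j ^ 2 * ∑ i, |tb ks q j (X i)| := by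
        rw [← Finset.mul_sum, Finset.sum_comm]
        simp only [Finset.mul_sum]
    _ ≤ A * ∑ j, θ j ^ 2 * (A * (n * (K2 * ((∏ k, (q k : ℝ)) * PJ)))) := by
        refine mul_le_mul_of_nonneg_left (Finset.sum_le_sum fun j _ => ?_) hA0
        refine mul_le_mul_of_nonneg_left ((hcount j).trans ?_) (sq_nonneg _)
        gcongr
    _ = _ := by rw [← Finset.sum_mul]; ring

/-- Index of the `r`-th active basis function on cell `l`. -/
def cemb {d : ℕ} (ks : Fin d → KnotSeq) (q : Fin d → ℕ)
    (l : (k : Fin d) → Fin ((ks k).N + 1)) (r : (k : Fin d) → Fin (q k)) :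
    (k : Fin d) → Fin ((ks k).N + q k) :=
  fun k => ⟨(l k : ℕ) + (r k : ℕ), by have := (l k).2; have := (r k).2; omega⟩

/-- Membership in a half-open cell. -/
def inCell {d : ℕ} (ks : Fin d → KnotSeq) (l : (k : Fin d) → Fin ((ks k).N + 1))
    (x : Fin d → ℝ) : Prop :=
  ∀ k, (ks k).T ((l k : ℕ) : ℤ) ≤ x k ∧ x k < (ks k).T (((l k : ℕ) : ℤ) + 1)

lemma inCell_unique {d : ℕ} (ks : Fin d → KnotSeq) (l l' : (k : Fin d) → Fin ((ks k).N + 1))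
    (x : Fin d → ℝ) (h : inCell ks l x) (h' : inCell ks l' x) : l = l' := by
  funext k
  by_contra hne
  have hne' : (l k : ℕ) ≠ (l' k : ℕ) := fun h => hne (Fin.ext h)
  rcases lt_or_gt_of_ne hne' with hlt | hlt
  · have := (ks k).T_mono (show ((l k : ℕ) : ℤ) + 1 ≤ ((l' k : ℕ) : ℤ) by omega)
    linarith [(h k).2, (h' k).1]
  · have := (ks k).T_mono (show ((l' k : ℕ) : ℤ) + 1 ≤ ((l k : ℕ) : ℤ) by omega)
    linarith [(h' k).2, (h k).1]

lemma spl_cell {d : ℕ} (ks : Fin d → KnotSeq) (q : Fin d → ℕ) (hq : ∀ k, 1 ≤ q k)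
    (θ : ((k : Fin d) → Fin ((ks k).N + q k)) → ℝ)
    (l : (k : Fin d) → Fin ((ks k).N + 1)) (x : Fin d → ℝ) (hx : inCell ks l x) :
    spl ks q θ x = ∑ r, θ (cemb ks q l r) *
      ∏ k, Bspl (ks k).T (q k) (((l k : ℕ) : ℤ) + 1 + ((r k : ℕ) : ℤ)) (x k) := by
  unfold spl
  symm
  refine Fintype.sum_of_injective (cemb ks q l) ?_ _ _ ?_ ?_
  · intro r r' h
    funext k
    have := congrArg Fin.val (congrFun h k)
    simp only [cemb] at this
    exact Fin.ext (by omega)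
  · intro j hj
    have : ∃ k, (j k : ℕ) < l k ∨ (l k : ℕ) + q k ≤ j k := by
      by_contra hcon
      push Not at hcon
      refine hj ⟨fun k => ⟨(j k : ℕ) - l k, by have := hcon k; omega⟩, ?_⟩
      funext k
      have := hcon k
      exact Fin.ext (by simp only [cemb]; omega)
    obtain ⟨k, hk⟩ := this
    have h0 : Bspl (ks k).T (q k) (((j k : ℕ) : ℤ) + 1) (x k) = 0 :=
      bspl_zero (ks k).T (ks k).T_mono (ks k).T_le_one (q k) (hq k) (((l k : ℕ) : ℤ) + 1) (x k)
        (by rw [add_sub_cancel_right]; exact (hx k).1) (hx k).2 _ (by omega)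
    unfold tb
    rw [Finset.prod_eq_zero (Finset.mem_univ k) h0, mul_zero]
  · intro r
    unfold tb
    congr 1
    refine Finset.prod_congr rfl fun k _ => ?_
    congr 1
    simp only [cemb]
    push_cast
    ring

lemma lower_bound {d n : ℕ} (ks : Fin d → KnotSeq) (q : Fin d → ℕ) (hq : ∀ k, 1 ≤ q k)
    (C₀ : ℝ) (hC₀ : 1 ≤ C₀) (hks : ∀ k, (ks k).QuasiUniform C₀)
    (X : Fin n → Fin d → ℝ) (hX : ∀ i k, X i k ∈ Set.Icc (0 : ℝ) 1)
    (g : (Fin d → ℝ) → ℝ) (hg : Measurable g) (Kmin Kmax : ℝ) (hK : 0 < Kmin)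
    (hg1 : ∀ y ∈ ucube d, Kmin ≤ g y) (hg2 : ∀ y ∈ ucube d, g y ≤ Kmax)
    (D : ℝ) (hD : 1 ≤ D)
    (hdual : ∀ (k : Fin d) (T : ℤ → ℝ), Monotone T → (∀ l, T l ≤ 1) → ∀ l : ℤ,
      0 < T l - T (l - 1) →
      (∀ i : ℤ, l - q k ≤ i → i ≤ l + q k →
        |T i - T (l - 1)| ≤ (((q k : ℝ) + 1) * C₀) * (T l - T (l - 1))) →
      ∃ M : Fin (q k) → Fin (q k) → ℝ,
        (∀ r r' : Fin (q k), ∑ m, M m r' * Bspl T (q k) (l + (r : ℕ))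
          (T (l - 1) + (T l - T (l - 1)) * unode (q k) m) = if r = r' then 1 else 0) ∧
        ∀ r', ∑ m, |M m r'| ≤ D)
    (Q : ℕ) (hQ : ∀ k, q k ≤ Q) (η : ℝ) (hη : 0 < η) (hη1 : η ≤ 1 / ((Q : ℝ) + 2))
    (hη2 : D ^ d * ((∏ k, (q k : ℝ)) * (d * (2 ^ Q) ^ d * (4 ^ Q * η))) ≤ 1 / 2)
    (ε : ℝ) (hε : 0 ≤ ε) (hε1 : 4 ^ d * ε ≤ Kmin * (η / C₀) ^ d / 2)
    (hG : ∀ x ∈ ucube d, |(n : ℝ)⁻¹ * (∑ i, oind x (X i)) -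
      ∫ y in Set.univ.pi fun k => Set.Icc 0 (x k), g y| ≤ ε * ∏ k, ((ks k).N : ℝ)⁻¹)
    (θ : ((k : Fin d) → Fin ((ks k).N + q k)) → ℝ) :
    (Kmin * (η / C₀) ^ d / 2) / ((∏ k, (q k : ℝ)) * (2 * D ^ d) ^ 2) * n *
      (∏ k, (((ks k).N + q k : ℕ) : ℝ)⁻¹) * ∑ j, θ j ^ 2 ≤ ∑ i, spl ks q θ (X i) ^ 2 := by
  set P : ℝ := ∏ k, (((ks k).N : ℝ) + 1)⁻¹ with hP
  set PJ : ℝ := ∏ k, (((ks k).N + q k : ℕ) : ℝ)⁻¹ with hPJ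
  set κ : ℝ := Kmin * (η / C₀) ^ d / 2 with hκ
  have hC0 : 0 < C₀ := by linarith
  have hκ0 : 0 < κ := by positivity
  have hP0 : 0 ≤ P := Finset.prod_nonneg fun _ _ => by positivity
  have hPP : PJ ≤ P := by
    refine Finset.prod_le_prod (fun _ _ => by positivity) fun k _ => ?_
    have h1 : (1 : ℝ) ≤ q k := by exact_mod_cast hq k
    have h2 : (0 : ℝ) ≤ (ks k).N := Nat.cast_nonneg _
    push_cast
    exact inv_anti₀ (by linarith) (by linarith)
  have hE0 : 0 ≤ ε * ∏ k, ((ks k).N : ℝ)⁻¹ :=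
    mul_nonneg hε (Finset.prod_nonneg fun _ _ => by positivity)
  have hprodq : 0 < ∏ k, (q k : ℝ) :=
    Finset.prod_pos fun k _ => by exact_mod_cast hq k
  -- the bound on one cell
  have hcell : ∀ (l : (k : Fin d) → Fin ((ks k).N + 1)) (r : (k : Fin d) → Fin (q k)),
      θ (cemb ks q l r) ^ 2 * (n * (κ * P)) ≤ (2 * D ^ d) ^ 2 *
        ∑ i, (if inCell ks l (X i) then 1 else 0) * spl ks q θ (X i) ^ 2 := by
    intro l
    set a : Fin d → ℝ := fun k => (ks k).T ((l k : ℕ) : ℤ) with ha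
    set δ : Fin d → ℝ := fun k => (ks k).T (((l k : ℕ) : ℤ) + 1) - (ks k).T ((l k : ℕ) : ℤ) with hδ
    have hmesh : ∀ k, (ks k).mesh ≤ C₀ * δ k := fun k =>
      (ks k).mesh_le_step C₀ (hks k) (l k) (l k).2
    have hδ0 : ∀ k, 0 < δ k := fun k => by
      have := hmesh k
      have h2 := (ks k).mesh_pos
      by_contra hcon
      push Not at hcon
      nlinarith
    have hδ1 : ∀ k, C₀⁻¹ * (((ks k).N : ℝ) + 1)⁻¹ ≤ δ k := fun k => by
      have h1 := hmesh k
      have h2 := (ks k).one_le_mesh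
      have h3 : (0 : ℝ) < (ks k).N + 1 := by positivity
      rw [← mul_inv, inv_eq_one_div, div_le_iff₀ (by positivity)]
      nlinarith
    have hM : ∀ k, ∃ M : Fin (q k) → Fin (q k) → ℝ,
        (∀ r r' : Fin (q k), ∑ m, M m r' * Bspl (ks k).T (q k) (((l k : ℕ) : ℤ) + 1 + ((r : ℕ) : ℤ))
          (a k + δ k * unode (q k) m) = if r = r' then 1 else 0) ∧
        ∀ r', ∑ m, |M m r'| ≤ D := by
      intro k
      have := hdual k (ks k).T (ks k).T_mono (ks k).T_le_one (((l k : ℕ) : ℤ) + 1)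
      rw [add_sub_cancel_right] at this
      refine this (hδ0 k) ?_
      intro i hi1 hi2
      have hqm : ((q k : ℝ) + 1) * (ks k).mesh ≤ ((q k : ℝ) + 1) * C₀ * δ k := by
        rw [mul_assoc]
        exact mul_le_mul_of_nonneg_left (hmesh k) (by positivity)
      refine le_trans ?_ hqm
      have hmp := (ks k).mesh_pos
      rcases le_total i ((l k : ℕ) : ℤ) with hle | hle
      · obtain ⟨p, hp⟩ : ∃ p : ℕ, ((l k : ℕ) : ℤ) = i + p :=
          ⟨(((l k : ℕ) : ℤ) - i).toNat, by omega⟩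
        have h1 := (ks k).T_sub_le i p
        have h2 := (ks k).T_mono hle
        rw [← hp] at h1
        rw [abs_sub_comm, abs_of_nonneg (by linarith)]
        have h3 : (p : ℝ) ≤ (q k : ℝ) + 1 := by
          have : p ≤ q k + 1 := by omega
          exact_mod_cast this
        exact h1.trans (mul_le_mul_of_nonneg_right h3 hmp.le)
      · obtain ⟨p, hp⟩ : ∃ p : ℕ, i = ((l k : ℕ) : ℤ) + p :=
          ⟨(i - ((l k : ℕ) : ℤ)).toNat, by omega⟩
        have h1 := (ks k).T_sub_le ((l k : ℕ) : ℤ) p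
        have h2 := (ks k).T_mono hle
        rw [← hp] at h1
        rw [abs_of_nonneg (by linarith)]
        have h3 : (p : ℝ) ≤ (q k : ℝ) + 1 := by
          have : p ≤ q k + 1 := by omega
          exact_mod_cast this
        exact h1.trans (mul_le_mul_of_nonneg_right h3 hmp.le)
    choose M hM1 hM2 using hM
    obtain ⟨m, hm⟩ := local_stab q hq
      (fun k r x => Bspl (ks k).T (q k) (((l k : ℕ) : ℤ) + 1 + ((r : ℕ) : ℤ)) x)
      (fun k m => a k + δ k * unode (q k) m) M D (2 ^ Q) (4 ^ Q * η) hD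
      (one_le_pow₀ (by norm_num)) (by positivity) hM1 hM2
      (fun k r x => (bspl_abs (ks k).T (ks k).T_mono (ks k).T_le_one x (q k) (hq k) _).trans
        (pow_le_pow_right₀ (by norm_num) (hQ k))) hη2 (fun r => θ (cemb ks q l r))
    intro r
    set z : Fin d → ℝ := fun k => a k + δ k * unode (q k) (m k) with hz
    set α : Fin d → ℝ := fun k => z k - η * δ k with hα
    set β : Fin d → ℝ := fun k => z k + η * δ k with hβ
    have hηq : ∀ k, η < 1 / ((q k : ℝ) + 1) := fun k => by
      refine lt_of_le_of_lt hη1 ?_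
      have : (q k : ℝ) ≤ Q := by exact_mod_cast hQ k
      apply one_div_lt_one_div_of_lt
      · positivity
      · linarith
    have hαa : ∀ k, a k ≤ α k := fun k => by
      have h1 := unode_lower (q k) (m k)
      have h2 := hηq k
      have h3 := hδ0 k
      simp only [hα, hz]
      nlinarith
    have hβb : ∀ k, β k < a k + δ k := fun k => by
      have h1 := unode_upper (q k) (m k)
      have h2 := hηq k
      have h3 := hδ0 k
      simp only [hβ, hz]
      nlinarith
    have hαβ : ∀ k, α k ≤ β k := fun k => by
      have := mul_pos hη (hδ0 k)
      simp only [hα, hβ]; linarith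
    have hab : ∀ k, a k + δ k = (ks k).T (((l k : ℕ) : ℤ) + 1) := fun k => by
      simp only [ha, hδ]; ring
    have hcount := count_lower X hX g hg Kmin Kmax hK hg1 hg2 _ hE0 hG α β hαβ
      (fun k => by
        have := hβb k
        rw [hab k] at this
        linarith [(ks k).T_le_one (((l k : ℕ) : ℤ) + 1)])
      (fun k => ((ks k).T_nonneg _).trans (hαa k))
    have hvol : (η / C₀) ^ d * P ≤ ∏ k, (β k - α k) := by
      have : (η / C₀) ^ d * P = ∏ k : Fin d, (η / C₀) * (((ks k).N : ℝ) + 1)⁻¹ := by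
        rw [Finset.prod_mul_distrib, Finset.prod_const, Finset.card_univ, Fintype.card_fin]
      rw [this]
      refine Finset.prod_le_prod (fun _ _ => by positivity) fun k _ => ?_
      have h1 := mul_le_mul_of_nonneg_left (hδ1 k) hη.le
      have h2 := mul_pos hη (hδ0 k)
      simp only [hα, hβ]
      calc _ = η * (C₀⁻¹ * (((ks k).N : ℝ) + 1)⁻¹) := by ring
        _ ≤ _ := by linarith
    have hlow : n * (κ * P) ≤ ∑ i, boxInd α β (X i) := by
      refine le_trans (mul_le_mul_of_nonneg_left ?_ (Nat.cast_nonneg n)) hcount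
      have h1 := mul_le_mul_of_nonneg_left hvol hK.le
      have h2 : 2 ^ d * (ε * ∏ k, ((ks k).N : ℝ)⁻¹) ≤ κ * P := by
        calc 2 ^ d * (ε * ∏ k, ((ks k).N : ℝ)⁻¹) ≤ 2 ^ d * (ε * (2 ^ d * P)) := by
              refine mul_le_mul_of_nonneg_left ?_ (by positivity)
              exact mul_le_mul_of_nonneg_left (prod_invN_le _) hε
          _ = (4 ^ d * ε) * P := by
              rw [show (4 : ℝ) = 2 * 2 by norm_num, mul_pow]; ring
          _ ≤ _ := mul_le_mul_of_nonneg_right hε1 hP0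
      have h3 : Kmin * ((η / C₀) ^ d * P) = 2 * (κ * P) := by rw [hκ]; ring
      linarith
    calc θ (cemb ks q l r) ^ 2 * (n * (κ * P))
        ≤ θ (cemb ks q l r) ^ 2 * ∑ i, boxInd α β (X i) :=
          mul_le_mul_of_nonneg_left hlow (sq_nonneg _)
      _ = ∑ i, boxInd α β (X i) * θ (cemb ks q l r) ^ 2 := by
          rw [Finset.mul_sum]; exact Finset.sum_congr rfl fun i _ => mul_comm _ _
      _ ≤ ∑ i, (2 * D ^ d) ^ 2 * ((if inCell ks l (X i) then 1 else 0) * spl ks q θ (X i) ^ 2) := by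
          refine Finset.sum_le_sum fun i _ => ?_
          unfold boxInd
          split_ifs with hbox hc hc
          · rw [one_mul, one_mul, spl_cell ks q hq θ l (X i) hc]
            refine hm (X i) ?_ r
            intro k r'
            have hzc : a k ≤ z k ∧ z k < a k + δ k := by
              have h1 := mul_pos hη (hδ0 k)
              have h2 := hαa k
              have h3 := hβb k
              simp only [hα] at h2
              simp only [hβ] at h3
              constructor <;> linarith
            have hl := bspl_lip (ks k).T (ks k).T_mono (ks k).T_le_one (q k) (hq k)
              (((l k : ℕ) : ℤ) + 1) (X i k) (z k)
              (by rw [add_sub_cancel_right]; exact (hc k).1) (hc k).2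
              (by rw [add_sub_cancel_right]; exact hzc.1) (by rw [← hab k]; exact hzc.2)
              (((l k : ℕ) : ℤ) + 1 + ((r' : ℕ) : ℤ))
            rw [add_sub_cancel_right] at hl
            refine hl.trans ?_
            have h4 : |X i k - z k| / δ k ≤ η := by
              rw [div_le_iff₀ (hδ0 k), abs_le]
              have h5 := hbox k
              simp only [hα, hβ] at h5
              constructor <;> linarith [h5.1, h5.2]
            have h6 : (4 : ℝ) ^ q k ≤ 4 ^ Q := pow_le_pow_right₀ (by norm_num) (hQ k)
            exact mul_le_mul h6 h4 (div_nonneg (abs_nonneg _) (hδ0 k).le) (by positivity)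
          · exfalso
            refine hc fun k => ⟨(hαa k).trans (hbox k).1.le, ?_⟩
            rw [← hab k]
            exact lt_of_le_of_lt (hbox k).2 (hβb k)
          · rw [zero_mul]; positivity
          · simp
      _ = _ := by rw [Finset.mul_sum]
  -- every index is active on some cell
  have hsum : ∑ j, θ j ^ 2 ≤ ∑ p : ((k : Fin d) → Fin ((ks k).N + 1)) × ((k : Fin d) → Fin (q k)),
      θ (cemb ks q p.1 p.2) ^ 2 := by
    let σ : ((k : Fin d) → Fin ((ks k).N + q k)) →
        ((k : Fin d) → Fin ((ks k).N + 1)) × ((k : Fin d) → Fin (q k)) :=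
      fun j => (fun k => ⟨min (j k : ℕ) (ks k).N, by omega⟩,
        fun k => ⟨(j k : ℕ) - min (j k : ℕ) (ks k).N, by have := (j k).2; have := hq k; omega⟩)
    have hσ : ∀ j, cemb ks q (σ j).1 (σ j).2 = j := by
      intro j; funext k; exact Fin.ext (by simp only [σ, cemb]; omega)
    have hinj : Function.Injective σ := fun j j' h => by rw [← hσ j, ← hσ j', h]
    calc ∑ j, θ j ^ 2 = ∑ j, θ (cemb ks q (σ j).1 (σ j).2) ^ 2 :=
          Finset.sum_congr rfl fun j _ => by rw [hσ]
      _ = ∑ p ∈ Finset.univ.map ⟨σ, hinj⟩, θ (cemb ks q p.1 p.2) ^ 2 := by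
          rw [Finset.sum_map]; rfl
      _ ≤ _ := Finset.sum_le_sum_of_subset_of_nonneg (Finset.subset_univ _)
          fun _ _ _ => sq_nonneg _
  have hdisj : ∀ x : Fin d → ℝ, ∑ l : (k : Fin d) → Fin ((ks k).N + 1),
      (if inCell ks l x then (1 : ℝ) else 0) ≤ 1 := by
    intro x
    by_cases h : ∃ l, inCell ks l x
    · obtain ⟨l, hl⟩ := h
      rw [Finset.sum_eq_single l]
      · rw [if_pos hl]
      · intro l' _ hne
        rw [if_neg]
        exact fun h' => hne (inCell_unique ks l' l x h' hl)
      · intro h; exact absurd (Finset.mem_univ l) h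
    · push Not at h
      rw [Finset.sum_eq_zero fun l _ => if_neg (h l)]
      exact zero_le_one
  have hmain : (∑ j, θ j ^ 2) * (n * (κ * P)) ≤
      (∏ k, (q k : ℝ)) * (2 * D ^ d) ^ 2 * ∑ i, spl ks q θ (X i) ^ 2 := by
    have hnn : 0 ≤ (n : ℝ) * (κ * P) := by positivity
    calc (∑ j, θ j ^ 2) * (n * (κ * P))
        ≤ (∑ p : ((k : Fin d) → Fin ((ks k).N + 1)) × ((k : Fin d) → Fin (q k)),
          θ (cemb ks q p.1 p.2) ^ 2) * (n * (κ * P)) := mul_le_mul_of_nonneg_right hsum hnn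
      _ = ∑ l : (k : Fin d) → Fin ((ks k).N + 1), ∑ r : (k : Fin d) → Fin (q k),
          θ (cemb ks q l r) ^ 2 * (n * (κ * P)) := by
          rw [Fintype.sum_prod_type, Finset.sum_mul]
          exact Finset.sum_congr rfl fun l _ => Finset.sum_mul _ _ _
      _ ≤ ∑ l : (k : Fin d) → Fin ((ks k).N + 1), ∑ _r : (k : Fin d) → Fin (q k),
          (2 * D ^ d) ^ 2 *
            ∑ i, (if inCell ks l (X i) then 1 else 0) * spl ks q θ (X i) ^ 2 :=
          Finset.sum_le_sum fun l _ => Finset.sum_le_sum fun r _ => hcell l r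
      _ = (∏ k, (q k : ℝ)) * (2 * D ^ d) ^ 2 * ∑ i, (∑ l : (k : Fin d) → Fin ((ks k).N + 1),
            if inCell ks l (X i) then 1 else 0) * spl ks q θ (X i) ^ 2 := by
          simp only [Finset.sum_const, Finset.card_univ, Fintype.card_pi, Fintype.card_fin,
            nsmul_eq_mul, Nat.cast_prod]
          rw [← Finset.mul_sum, ← Finset.mul_sum, Finset.sum_comm, mul_assoc]
          congr 2
          exact Finset.sum_congr rfl fun i _ => (Finset.sum_mul _ _ _).symm
      _ ≤ _ := by
          refine mul_le_mul_of_nonneg_left ?_ (by positivity)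
          refine Finset.sum_le_sum fun i _ => ?_
          exact mul_le_of_le_one_left (sq_nonneg _) (hdisj _)
  have hden : 0 < (∏ k, (q k : ℝ)) * (2 * D ^ d) ^ 2 := by positivity
  have hS : 0 ≤ ∑ j, θ j ^ 2 := Finset.sum_nonneg fun _ _ => sq_nonneg _
  calc _ = ((∑ j, θ j ^ 2) * (n * (κ * PJ))) / ((∏ k, (q k : ℝ)) * (2 * D ^ d) ^ 2) := by ring
    _ ≤ ((∑ j, θ j ^ 2) * (n * (κ * P))) / ((∏ k, (q k : ℝ)) * (2 * D ^ d) ^ 2) := by gcongr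
    _ ≤ _ := by
        rw [div_le_iff₀ hden]
        linarith


/-- Fix `d ≥ 1`, orders `q_k ≥ 2`, a quasi-uniformity constant
`C₀ ≥ 1` and `0 < K_min ≤ K_max`. There are `ε₀ ∈ (0,1)` and `0 < c ≤ C`, depending
only on `q, d, C₀, K_min, K_max`, such that whenever the knot sequences are quasi-uniform
with constant `C₀`, `G` is a distribution function on `[0,1]^d` with density in
`[K_min, K_max]`, and the design points satisfy `sup_x |G_n(x) − G(x)| ≤ ε₀ Π_k N_k⁻¹`,
then `c n (Π_k J_k⁻¹) ‖θ‖² ≤ θᵀBᵀBθ ≤ C n (Π_k J_k⁻¹) ‖θ‖²` for every `θ`. -/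
theorem statement16 (d : ℕ) (hd : 1 ≤ d) (q : Fin d → ℕ) (hq : ∀ k, 2 ≤ q k)
    (C₀ Kmin Kmax : ℝ) (hC₀ : 1 ≤ C₀) (hKmin : 0 < Kmin) (hKK : Kmin ≤ Kmax) :
    ∃ ε₀ ∈ Set.Ioo (0 : ℝ) 1, ∃ c C : ℝ, 0 < c ∧ c ≤ C ∧
      ∀ (ks : Fin d → KnotSeq), (∀ k, (ks k).QuasiUniform C₀) →
      ∀ (n : ℕ) (X : Fin n → Fin d → ℝ), (∀ i k, X i k ∈ Set.Icc (0 : ℝ) 1) →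
      ∀ g : (Fin d → ℝ) → ℝ, Measurable g →
        (∀ y ∈ Set.univ.pi fun _ : Fin d => Set.Icc (0 : ℝ) 1, Kmin ≤ g y) →
        (∀ y ∈ Set.univ.pi fun _ : Fin d => Set.Icc (0 : ℝ) 1, g y ≤ Kmax) →
        (∫ y in Set.univ.pi fun _ : Fin d => Set.Icc (0 : ℝ) 1, g y) = 1 →
        (∀ x ∈ Set.univ.pi fun _ : Fin d => Set.Icc (0 : ℝ) 1,
          |(n : ℝ)⁻¹ * (∑ i, if ∀ k, X i k ≤ x k then (1 : ℝ) else 0) -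
              ∫ y in Set.univ.pi fun k => Set.Icc 0 (x k), g y| ≤
            ε₀ * ∏ k, ((ks k).N : ℝ)⁻¹) →
        ∀ θ : ((k : Fin d) → Fin ((ks k).N + q k)) → ℝ,
          c * n * (∏ k, (((ks k).N + q k : ℕ) : ℝ)⁻¹) * (∑ j, θ j ^ 2) ≤
              (∑ i, (∑ j, θ j *
                ∏ k, Bspl (ks k).T (q k) (((j k : ℕ) : ℤ) + 1) (X i k)) ^ 2) ∧
            (∑ i, (∑ j, θ j *
                ∏ k, Bspl (ks k).T (q k) (((j k : ℕ) : ℤ) + 1) (X i k)) ^ 2) ≤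
              C * n * (∏ k, (((ks k).N + q k : ℕ) : ℝ)⁻¹) * (∑ j, θ j ^ 2) := by
  have hq1 : ∀ k, 1 ≤ q k := fun k => by have := hq k; omega
  have hC0 : 0 < C₀ := by linarith
  have hKm : 0 ≤ Kmax := by linarith
  have hex := fun k => dual_exists (q k) (hq1 k) (((q k : ℝ) + 1) * C₀)
  choose D' hD1 hD2 using hex
  obtain ⟨D, hD, hDD⟩ : ∃ D : ℝ, 1 ≤ D ∧ ∀ k, D' k ≤ D := by
    refine ⟨1 + ∑ k, D' k, ?_, fun k => ?_⟩
    · have : 0 ≤ ∑ k, D' k := Finset.sum_nonneg fun k _ => by linarith [hD1 k]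
      linarith
    · have := Finset.single_le_sum (f := D') (fun k _ => by linarith [hD1 k]) (Finset.mem_univ k)
      linarith
  obtain ⟨Q, hQ⟩ : ∃ Q : ℕ, ∀ k, q k ≤ Q :=
    ⟨∑ k, q k, fun k => Finset.single_le_sum (f := q) (fun _ _ => Nat.zero_le _) (Finset.mem_univ k)⟩
  have hprodq : 0 < ∏ k, (q k : ℝ) := Finset.prod_pos fun k _ => by exact_mod_cast hq1 k
  set W : ℝ := D ^ d * ((∏ k, (q k : ℝ)) * (d * (2 ^ Q) ^ d * 4 ^ Q)) with hW
  have hW0 : 0 ≤ W := by positivity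
  obtain ⟨η, hη, hη1, hη2⟩ : ∃ η : ℝ, 0 < η ∧ η ≤ 1 / ((Q : ℝ) + 2) ∧ W * η ≤ 1 / 2 := by
    refine ⟨min (1 / ((Q : ℝ) + 2)) (1 / (2 * (W + 1))), by positivity, min_le_left _ _, ?_⟩
    calc W * min (1 / ((Q : ℝ) + 2)) (1 / (2 * (W + 1))) ≤ W * (1 / (2 * (W + 1))) :=
          mul_le_mul_of_nonneg_left (min_le_right _ _) hW0
      _ ≤ 1 / 2 := by
          rw [mul_one_div, div_le_div_iff₀ (by positivity) (by norm_num)]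
          linarith
  set κ : ℝ := Kmin * (η / C₀) ^ d / 2 with hκ
  have hκ0 : 0 < κ := by positivity
  obtain ⟨ε, hε0, hε1, hε2⟩ : ∃ ε : ℝ, 0 < ε ∧ ε < 1 ∧ 4 ^ d * ε ≤ κ := by
    refine ⟨min (1 / 2) (κ / 4 ^ d), by positivity, ?_, ?_⟩
    · exact lt_of_le_of_lt (min_le_left _ _) (by norm_num)
    · calc (4 : ℝ) ^ d * min (1 / 2) (κ / 4 ^ d) ≤ 4 ^ d * (κ / 4 ^ d) :=
            mul_le_mul_of_nonneg_left (min_le_right _ _) (by positivity)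
        _ = κ := by field_simp
  set c : ℝ := κ / ((∏ k, (q k : ℝ)) * (2 * D ^ d) ^ 2) with hc
  set C : ℝ := (∏ k, (2 : ℝ) ^ q k) ^ 2 * (Kmax * ∏ k, (((q k : ℝ) + 1) * C₀) + 4 ^ d) *
    ∏ k, (q k : ℝ) with hC
  refine ⟨ε, ⟨hε0, hε1⟩, c, max c C, by positivity, le_max_left _ _, ?_⟩
  intro ks hks n X hX g hg hg1 hg2 _ hG θ
  constructor
  · exact lower_bound ks q hq1 C₀ hC₀ hks X hX g hg Kmin Kmax hKmin hg1 hg2 D hD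
      (fun k T hT hT1 l hl hTl => by
        obtain ⟨M, hM1, hM2⟩ := hD2 k T hT hT1 l hl hTl
        exact ⟨M, hM1, fun r' => (hM2 r').trans (hDD k)⟩)
      Q hQ η hη hη1 (le_trans (le_of_eq (by rw [hW]; ring)) hη2) ε hε0.le hε2 hG θ
  · refine (upper_bound ks q hq1 C₀ hC₀ hks X hX g hg Kmin Kmax hKmin hKm hg1 hg2 ε hε0.le
      hε1.le hG θ).trans ?_
    have hS : 0 ≤ ∑ j, θ j ^ 2 := Finset.sum_nonneg fun _ _ => sq_nonneg _
    have hPJ : 0 ≤ ∏ k, (((ks k).N + q k : ℕ) : ℝ)⁻¹ :=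
      Finset.prod_nonneg fun _ _ => by positivity
    have : C ≤ max c C := le_max_right _ _
    gcongr
end

section
/- Fix orders q = (q_1,…,q_d) and r ∈ ℕ₀^d with r_k ≤ q_k − 1, and in each direction k a quasi-uniform knot sequence (constant C₀) with N_k interior knots and J_k = N_k + q_k. Let W_r be the weighted finite-differencing matrix defined below. Then there is a constant C > 0 depending only on q, r, d and C₀ such that ‖W_r‖_{(∞,∞)} ≤ C ∏_{k=1}^d J_k^{r_k}, ‖W_rᵀ‖_{(∞,∞)} ≤ C ∏_{k=1}^d J_k^{r_k}, and ‖W_rᵀ W_r‖_{(2,2)} ≤ C ∏_{k=1}^d J_k^{2r_k}. -/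
open MeasureTheory

/-- The weighted finite-differencing operator `𝔇_{j_k}^{r_k}` in direction `k`, acting on
coefficient arrays indexed by `ℤ^d`:  `𝔇^0 θ = θ` and
`𝔇^{r+1} θ_j = (q_k − (r+1)) (𝔇^r θ_{j + e_k} − 𝔇^r θ_j)/(t_{k,j_k} − t_{k,j_k−q_k+1})`. -/
noncomputable def Dop {d : ℕ} (k : Fin d) (qk : ℕ) (T : ℤ → ℝ) :
    ℕ → ((Fin d → ℤ) → ℝ) → ((Fin d → ℤ) → ℝ)
  | 0, θ => θ
  | r + 1, θ => fun j =>
      ((qk : ℝ) - (r + 1)) *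
          (Dop k qk T r θ (Function.update j k (j k + 1)) - Dop k qk T r θ j) /
        (T (j k) - T (j k - qk + 1))

/-- The composite operator `𝔇^r = 𝔇^{r_1}_{j_1} ⋯ 𝔇^{r_d}_{j_d}` applying the weighted
finite differencing in every direction. -/
noncomputable def Dall {d : ℕ} (q : Fin d → ℕ) (T : Fin d → ℤ → ℝ) (r : Fin d → ℕ)
    (θ : (Fin d → ℤ) → ℝ) : (Fin d → ℤ) → ℝ :=
  (List.finRange d).foldr (fun k acc => Dop k (q k) (T k) (r k) acc) θ

/-- The matrix `W_r` of the linear map `θ ↦ (𝔇^r θ_i)_{1 ≤ i_k ≤ J_k − r_k}`, with rows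
indexed by multi-indices `i` with `1 ≤ i_k ≤ J_k − r_k` and columns by multi-indices `j`
with `1 ≤ j_k ≤ J_k` (here `J_k = N_k + q_k`); its `(i,j)` entry is the coefficient of
`θ_j` in `(𝔇^r θ)_i`, i.e. `𝔇^r` applied to the standard basis array `e_j`, evaluated
at `i`. -/
noncomputable def Wmat {d : ℕ} (q r : Fin d → ℕ) (ks : Fin d → KnotSeq)
    (i : (k : Fin d) → Fin ((ks k).N + q k - r k))
    (j : (k : Fin d) → Fin ((ks k).N + q k)) : ℝ :=
  Dall q (fun k => (ks k).T) r
    (fun idx => if idx = (fun k => ((j k : ℕ) : ℤ) + 1) then 1 else 0)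
    (fun k => ((i k : ℕ) : ℤ) + 1)

/-- Every spacing is bounded below. -/
theorem aux_spacing (ks : KnotSeq) (C₀ : ℝ) (hC₀ : 1 ≤ C₀) (h : ks.QuasiUniform C₀)
    (l : ℕ) (hl : l < ks.N + 1) :
    1 ≤ C₀ * (ks.N + 1) * (ks.t (l + 1) - ks.t l) := by
  have h1 : (1 : ℝ) ≤ (ks.N + 1) * ks.mesh := by
    have hs : ∑ l ∈ Finset.range (ks.N + 1), (ks.t (l + 1) - ks.t l) = 1 := by
      rw [Finset.sum_range_sub, ks.t0, ks.tN, sub_zero]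
    have hle : ∑ l ∈ Finset.range (ks.N + 1), (ks.t (l + 1) - ks.t l)
        ≤ ∑ l ∈ Finset.range (ks.N + 1), ks.mesh := by
      apply Finset.sum_le_sum
      intro m hm
      have hm' : m < ks.N + 1 := Finset.mem_range.mp hm
      have := Finset.le_sup' (s := Finset.Icc 1 (ks.N + 1))
        (fun l => ks.t l - ks.t (l - 1)) (b := m + 1)
        (Finset.mem_Icc.mpr ⟨by omega, by omega⟩)
      exact this
    rw [hs] at hle
    simpa using hle
  have h2 := h (l + 1) (Finset.mem_Icc.mpr ⟨by omega, by omega⟩)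
  simp only [Nat.add_sub_cancel] at h2
  have h3 : (0 : ℝ) ≤ (ks.N : ℝ) + 1 := by positivity
  nlinarith [mul_le_mul_of_nonneg_left h2 h3]

theorem aux_T_step (ks : KnotSeq) (C₀ : ℝ) (hC₀ : 1 ≤ C₀) (h : ks.QuasiUniform C₀) (l : ℤ) :
    ks.T (l + 1) - ks.T l = 0 ∨ 1 ≤ C₀ * (ks.N + 1) * (ks.T (l + 1) - ks.T l) := by
  by_cases h0 : l < 0
  · left
    simp [KnotSeq.T, show l + 1 ≤ 0 by omega, show l ≤ 0 by omega]
  by_cases h1 : (ks.N + 1 : ℤ) ≤ l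
  · left
    have a1 : ¬ l + 1 ≤ 0 := by omega
    have a2 : ¬ l ≤ 0 := by omega
    have a3 : (ks.N + 1 : ℤ) ≤ l + 1 := by omega
    simp only [KnotSeq.T, if_neg a1, if_neg a2, if_pos a3, if_pos h1, sub_self]
  right
  obtain ⟨n, rfl⟩ : ∃ n : ℕ, l = n := ⟨l.toNat, by omega⟩
  have hT : ∀ m : ℕ, m ≤ ks.N + 1 → ks.T (m : ℤ) = ks.t m := by
    intro m hm
    unfold KnotSeq.T
    split_ifs with c1 c2
    · have : m = 0 := by omega
      subst this; exact ks.t0.symm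
    · have : m = ks.N + 1 := by omega
      subst this; exact ks.tN.symm
    · simp
  have e1 := hT n (by omega)
  have e2 := hT (n + 1) (by omega)
  push_cast at e2
  rw [e1, e2]
  exact aux_spacing ks C₀ hC₀ h n (by omega)

theorem aux_T_diff (ks : KnotSeq) (C₀ : ℝ) (hC₀ : 1 ≤ C₀) (h : ks.QuasiUniform C₀)
    (a : ℤ) (n : ℕ) :
    ks.T (a + n) - ks.T a = 0 ∨ 1 ≤ C₀ * (ks.N + 1) * (ks.T (a + n) - ks.T a) := by
  induction n with
  | zero => left; simp
  | succ n ih =>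
    have hs := aux_T_step ks C₀ hC₀ h (a + n)
    push_cast
    rw [← add_assoc]
    have e : ks.T (a + n + 1) - ks.T a
        = (ks.T (a + n + 1) - ks.T (a + n)) + (ks.T (a + n) - ks.T a) := by ring
    rw [e, mul_add]
    rcases ih with ih | ih <;> rcases hs with hs | hs
    · left; rw [ih, hs, add_zero]
    · right; rw [ih, mul_zero, add_zero]; exact hs
    · right; rw [hs, mul_zero, zero_add]; exact ih
    · right; linarith

theorem aux_inv (ks : KnotSeq) (C₀ : ℝ) (hC₀ : 1 ≤ C₀) (h : ks.QuasiUniform C₀)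
    (q : ℕ) (hq : 1 ≤ q) (j : ℤ) :
    |(ks.T j - ks.T (j - q + 1))⁻¹| ≤ C₀ * ((ks.N + q : ℕ) : ℝ) := by
  have hd := aux_T_diff ks C₀ hC₀ h (j - q + 1) (q - 1)
  have ej : j - q + 1 + ((q - 1 : ℕ) : ℤ) = j := by omega
  rw [ej] at hd
  have hpos : (0 : ℝ) < C₀ * (ks.N + 1) := by positivity
  have hle : C₀ * (ks.N + 1) ≤ C₀ * ((ks.N + q : ℕ) : ℝ) := by
    have : (1 : ℝ) ≤ q := by exact_mod_cast hq
    push_cast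
    gcongr
  rcases hd with hd | hd
  · rw [hd, inv_zero, abs_zero]; linarith
  · have hD : 0 < ks.T j - ks.T (j - q + 1) := by
      by_contra hc
      nlinarith
    rw [abs_of_pos (inv_pos.mpr hD)]
    refine le_trans ?_ hle
    rw [inv_le_iff_one_le_mul₀ hD]
    exact hd

/-- Pointwise bound for one differencing step. -/
theorem aux_step {d : ℕ} (k : Fin d) (q : ℕ) (T : ℤ → ℝ) (M : ℝ) 
    (hM : ∀ j : ℤ, |(T j - T (j - q + 1))⁻¹| ≤ M) (r : ℕ) (hr : r + 1 ≤ q)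
    (θ : (Fin d → ℤ) → ℝ) (j : Fin d → ℤ) :
    |Dop k q T (r + 1) θ j| ≤
      q * M * (|Dop k q T r θ (Function.update j k (j k + 1))| + |Dop k q T r θ j|) := by
  simp only [Dop]
  rw [div_eq_mul_inv, abs_mul, abs_mul]
  have h1 : |(q : ℝ) - (r + 1)| ≤ q := by
    have : ((r : ℝ) + 1) ≤ q := by exact_mod_cast hr
    rw [abs_of_nonneg (by linarith)]
    have : (0 : ℝ) ≤ r := by positivity
    linarith
  have h2 := hM (j k)
  have h3 := abs_sub (Dop k q T r θ (Function.update j k (j k + 1))) (Dop k q T r θ j)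
  calc _ ≤ (q : ℝ) * (|Dop k q T r θ (Function.update j k (j k + 1))| + |Dop k q T r θ j|) * M := by
        gcongr
    _ = _ := by ring

theorem aux_row {d : ℕ} {ι : Type*} [Fintype ι] (k : Fin d) (q : ℕ) (T : ℤ → ℝ) (M : ℝ) 
    (hM : ∀ j : ℤ, |(T j - T (j - q + 1))⁻¹| ≤ M) (r : ℕ) (hr : r ≤ q)
    (e : ι → (Fin d → ℤ) → ℝ) (B : ℝ) (hB : ∀ i, ∑ j, |e j i| ≤ B) (i : Fin d → ℤ) :
    ∑ j, |Dop k q T r (e j) i| ≤ (2 * q * M) ^ r * B := by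
  have hM0 : 0 ≤ M := (abs_nonneg _).trans (hM 0)
  induction r generalizing i with
  | zero => simpa [Dop] using hB i
  | succ r ih =>
    have a1 := ih (by omega) i
    have a2 := ih (by omega) (Function.update i k (i k + 1))
    calc _ ≤ ∑ j, (q : ℝ) * M * (|Dop k q T r (e j) (Function.update i k (i k + 1))|
              + |Dop k q T r (e j) i|) :=
          Finset.sum_le_sum fun j _ => aux_step k q T M hM r hr (e j) i
      _ = (q : ℝ) * M * (∑ j, |Dop k q T r (e j) (Function.update i k (i k + 1))|
              + ∑ j, |Dop k q T r (e j) i|) := by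
          rw [← Finset.mul_sum, Finset.sum_add_distrib]
      _ ≤ (q : ℝ) * M * ((2 * q * M) ^ r * B + (2 * q * M) ^ r * B) := by gcongr
      _ = _ := by ring

theorem aux_col {d : ℕ} (k : Fin d) (q : ℕ) (T : ℤ → ℝ) (M : ℝ) 
    (hM : ∀ j : ℤ, |(T j - T (j - q + 1))⁻¹| ≤ M) (r : ℕ) (hr : r ≤ q)
    (θ : (Fin d → ℤ) → ℝ) (B : ℝ) (hB : ∀ S : Finset (Fin d → ℤ), ∑ i ∈ S, |θ i| ≤ B)
    (S : Finset (Fin d → ℤ)) :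
    ∑ i ∈ S, |Dop k q T r θ i| ≤ (2 * q * M) ^ r * B := by
  classical
  have hM0 : 0 ≤ M := (abs_nonneg _).trans (hM 0)
  induction r generalizing S with
  | zero => simpa [Dop] using hB S
  | succ r ih =>
    have hinj : Function.Injective
        (fun i : Fin d → ℤ => Function.update i k (i k + 1)) := by
      intro a b hab
      funext m
      have := congrFun hab m
      by_cases hm : m = k
      · subst hm; simpa using this
      · simpa [hm] using this
    have a1 := ih (by omega) S
    have a2 := ih (by omega) (S.image (fun i : Fin d → ℤ => Function.update i k (i k + 1)))
    rw [Finset.sum_image (fun a _ b _ hab => hinj hab)] at a2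
    calc _ ≤ ∑ i ∈ S, (q : ℝ) * M * (|Dop k q T r θ (Function.update i k (i k + 1))|
              + |Dop k q T r θ i|) :=
          Finset.sum_le_sum fun i _ => aux_step k q T M hM r hr θ i
      _ = (q : ℝ) * M * (∑ i ∈ S, |Dop k q T r θ (Function.update i k (i k + 1))|
              + ∑ i ∈ S, |Dop k q T r θ i|) := by
          rw [← Finset.mul_sum, Finset.sum_add_distrib]
      _ ≤ (q : ℝ) * M * ((2 * q * M) ^ r * B + (2 * q * M) ^ r * B) := by gcongr
      _ = _ := by ring

theorem aux_row_all {d : ℕ} {ι : Type*} [Fintype ι] (q r : Fin d → ℕ) (T : Fin d → ℤ → ℝ)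
    (M : Fin d → ℝ) (hM : ∀ k, ∀ j : ℤ, |(T k j - T k (j - q k + 1))⁻¹| ≤ M k)
    (hr : ∀ k, r k ≤ q k)
    (e : ι → (Fin d → ℤ) → ℝ) (hB : ∀ i, ∑ j, |e j i| ≤ 1) (i : Fin d → ℤ) :
    ∑ j, |Dall q T r (e j) i| ≤ ∏ k, (2 * q k * M k) ^ r k := by
  rw [Fin.prod_univ_def]
  unfold Dall
  generalize List.finRange d = L
  induction L generalizing i with
  | nil => simpa using hB i
  | cons k L ih =>
    simp only [List.foldr_cons, List.map_cons, List.prod_cons]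
    exact aux_row k (q k) (T k) (M k) (hM k) (r k) (hr k) _ _ ih i

theorem aux_col_all {d : ℕ} (q r : Fin d → ℕ) (T : Fin d → ℤ → ℝ)
    (M : Fin d → ℝ) (hM : ∀ k, ∀ j : ℤ, |(T k j - T k (j - q k + 1))⁻¹| ≤ M k)
    (hr : ∀ k, r k ≤ q k)
    (θ : (Fin d → ℤ) → ℝ) (hB : ∀ S : Finset (Fin d → ℤ), ∑ i ∈ S, |θ i| ≤ 1)
    (S : Finset (Fin d → ℤ)) :
    ∑ i ∈ S, |Dall q T r θ i| ≤ ∏ k, (2 * q k * M k) ^ r k := by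
  rw [Fin.prod_univ_def]
  unfold Dall
  generalize List.finRange d = L
  induction L generalizing S with
  | nil => simpa using hB S
  | cons k L ih =>
    simp only [List.foldr_cons, List.map_cons, List.prod_cons]
    exact aux_col k (q k) (T k) (M k) (hM k) (r k) (hr k) _ _ ih S

/-- Schur test. -/
theorem aux_schur {α β : Type*} [Fintype α] [Fintype β] (W : α → β → ℝ) (R : ℝ)
    (hR : ∀ i, ∑ j, |W i j| ≤ R) (hC : ∀ j, ∑ i, |W i j| ≤ R) (hR0 : 0 ≤ R) (θ : β → ℝ) :
    ∑ i, (∑ j, W i j * θ j) ^ 2 ≤ R ^ 2 * ∑ j, θ j ^ 2 := by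
  have h1 : ∀ i, (∑ j, W i j * θ j) ^ 2 ≤ R * ∑ j, |W i j| * θ j ^ 2 := by
    intro i
    have := Finset.sum_sq_le_sum_mul_sum_of_sq_eq_mul Finset.univ
      (r := fun j => W i j * θ j) (f := fun j => |W i j|) (g := fun j => |W i j| * θ j ^ 2)
      (fun j _ => abs_nonneg _) (fun j _ => by positivity)
      (fun j _ => by rw [← mul_assoc, abs_mul_abs_self]; ring)
    refine this.trans ?_
    have hn : 0 ≤ ∑ j, |W i j| * θ j ^ 2 := Finset.sum_nonneg fun j _ => by positivity
    exact mul_le_mul_of_nonneg_right (hR i) hn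
  calc _ ≤ ∑ i, R * ∑ j, |W i j| * θ j ^ 2 := Finset.sum_le_sum fun i _ => h1 i
    _ = R * ∑ j, (∑ i, |W i j|) * θ j ^ 2 := by
        rw [← Finset.mul_sum, Finset.sum_comm]
        simp_rw [Finset.sum_mul]
    _ ≤ R * ∑ j, R * θ j ^ 2 := by
        gcongr with j
        exact hC j
    _ = _ := by rw [← Finset.mul_sum]; ring

/-- For orders `q`, derivative orders `r_k ≤ q_k − 1` and quasi-uniform
knot sequences (constant `C₀`), there is a constant `C > 0` depending only on
`q, r, d, C₀` such that `‖W_r‖_{(∞,∞)} ≤ C Π_k J_k^{r_k}` (every row sum of absolute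
entries is so bounded), `‖W_rᵀ‖_{(∞,∞)} ≤ C Π_k J_k^{r_k}` (every column sum likewise),
and `‖W_rᵀW_r‖_{(2,2)} ≤ C Π_k J_k^{2 r_k}` (the quadratic form `θᵀ W_rᵀ W_r θ = ‖W_r θ‖²`
is bounded by `C Π_k J_k^{2 r_k} ‖θ‖²`). -/
theorem statement18 (d : ℕ) (hd : 1 ≤ d) (q r : Fin d → ℕ) (hr : ∀ k, r k < q k)
    (C₀ : ℝ) (hC₀ : 1 ≤ C₀) :
    ∃ C > (0 : ℝ), ∀ (ks : Fin d → KnotSeq), (∀ k, (ks k).QuasiUniform C₀) →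
      (∀ i : (k : Fin d) → Fin ((ks k).N + q k - r k),
          ∑ j : (k : Fin d) → Fin ((ks k).N + q k), |Wmat q r ks i j| ≤
            C * ∏ k, (((ks k).N + q k : ℕ) : ℝ) ^ r k) ∧
        (∀ j : (k : Fin d) → Fin ((ks k).N + q k),
          ∑ i : (k : Fin d) → Fin ((ks k).N + q k - r k), |Wmat q r ks i j| ≤
            C * ∏ k, (((ks k).N + q k : ℕ) : ℝ) ^ r k) ∧
        (∀ θ : ((k : Fin d) → Fin ((ks k).N + q k)) → ℝ,
          (∑ i : (k : Fin d) → Fin ((ks k).N + q k - r k),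
              (∑ j, Wmat q r ks i j * θ j) ^ 2) ≤
            C * (∏ k, (((ks k).N + q k : ℕ) : ℝ) ^ (2 * r k)) * ∑ j, θ j ^ 2) := by
  classical
  set A : ℝ := ∏ k, (2 * (q k : ℝ) * C₀) ^ r k with hA
  have hA0 : 0 ≤ A := Finset.prod_nonneg fun k _ => by positivity
  refine ⟨A + A ^ 2 + 1, by positivity, ?_⟩
  intro ks hks
  have hM : ∀ k, ∀ j : ℤ, |((ks k).T j - (ks k).T (j - q k + 1))⁻¹|
      ≤ C₀ * (((ks k).N + q k : ℕ) : ℝ) := fun k j =>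
    aux_inv (ks k) C₀ hC₀ (hks k) (q k) (by have := hr k; omega) j
  set P : ℝ := ∏ k, (((ks k).N + q k : ℕ) : ℝ) ^ r k with hP
  have hP0 : 0 ≤ P := Finset.prod_nonneg fun k _ => by positivity
  have hprod : ∏ k, (2 * (q k : ℝ) * (C₀ * (((ks k).N + q k : ℕ) : ℝ))) ^ r k = A * P := by
    rw [hA, hP, ← Finset.prod_mul_distrib]
    refine Finset.prod_congr rfl fun k _ => ?_
    rw [← mul_pow]; ring
  have hP2 : ∏ k, (((ks k).N + q k : ℕ) : ℝ) ^ (2 * r k) = P ^ 2 := by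
    rw [hP, ← Finset.prod_pow]
    refine Finset.prod_congr rfl fun k _ => ?_
    rw [← pow_mul, mul_comm]
  have hrow : ∀ i : (k : Fin d) → Fin ((ks k).N + q k - r k),
      ∑ j : (k : Fin d) → Fin ((ks k).N + q k), |Wmat q r ks i j| ≤ A * P := by
    intro i
    rw [← hprod]
    refine aux_row_all q r (fun k => (ks k).T) _ hM (fun k => (hr k).le)
      (fun (j : (k : Fin d) → Fin ((ks k).N + q k)) idx =>
        if idx = (fun k => ((j k : ℕ) : ℤ) + 1) then 1 else 0) ?_ _
    intro idx
    by_cases hex : ∃ j : (k : Fin d) → Fin ((ks k).N + q k),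
        idx = (fun k => ((j k : ℕ) : ℤ) + 1)
    · obtain ⟨j₀, rfl⟩ := hex
      rw [Finset.sum_eq_single j₀]
      · simp
      · intro b _ hb
        rw [if_neg, abs_zero]
        intro hc
        apply hb
        funext k
        have := congrFun hc k
        apply Fin.ext
        omega
      · simp
    · rw [Finset.sum_eq_zero]
      · exact zero_le_one
      · intro j _
        rw [if_neg (fun hc => hex ⟨j, hc⟩), abs_zero]
  have hcol : ∀ j : (k : Fin d) → Fin ((ks k).N + q k),
      ∑ i : (k : Fin d) → Fin ((ks k).N + q k - r k), |Wmat q r ks i j| ≤ A * P := by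
    intro j
    rw [← hprod]
    have key := aux_col_all q r (fun k => (ks k).T) _ hM (fun k => (hr k).le)
      (fun idx => if idx = (fun k => ((j k : ℕ) : ℤ) + 1) then 1 else 0) (by
        intro S
        simp only [apply_ite abs, abs_one, abs_zero, Finset.sum_ite_eq']
        split_ifs <;> norm_num)
      (Finset.univ.image
        (fun (i : (k : Fin d) → Fin ((ks k).N + q k - r k)) k => ((i k : ℕ) : ℤ) + 1))
    rw [Finset.sum_image] at key
    · exact key
    · intro a _ b _ hab
      funext k
      have := congrFun hab k
      apply Fin.ext
      simp only at this
      omega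
  have hAP : A * P ≤ (A + A ^ 2 + 1) * P := by
    gcongr
    nlinarith [sq_nonneg A]
  refine ⟨fun i => (hrow i).trans hAP, fun j => (hcol j).trans hAP, fun θ => ?_⟩
  rw [hP2]
  refine (aux_schur _ (A * P) hrow hcol (by positivity) θ).trans ?_
  have hθ : 0 ≤ ∑ j, θ j ^ 2 := Finset.sum_nonneg fun j _ => sq_nonneg _
  rw [mul_pow]
  gcongr
  nlinarith
end
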